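/- arXiv:1111.6038 — 10 statements merged into one kernel-verified Lean document; each statement's English description precedes it below -/
import Mathlib

section
/- For every martingale M = (M_j)_{0≤j≤T} with respect to the filtration (𝓕_i) and every i ∈ {0,…,T}, the Snell envelope satisfies Y*_i ≤ E[ max_{i≤j≤T} (Z_j − M_j + M_i) | 𝓕_i ] almost surely. -/
/-!
Backward induction on `i`. Write `W i = max_{i ≤ j ≤ T} (Z j - M j + M i)`. At `i = T` one has
`W T = Z T = Y T`. For `i < T`, two pointwise bounds hold: `Z i ≤ W i` (take `j = i`) and
`W (i + 1) + (M i - M (i + 1)) ≤ W i` (restrict the maximum to `j ≥ i + 1`). Conditioning the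
first on `𝓕 i` gives `Z i ≤ E[W i | 𝓕 i]`. Conditioning the second, the martingale increment
disappears, and the tower property with the induction hypothesis gives
`E[Y (i + 1) | 𝓕 i] ≤ E[W (i + 1) | 𝓕 i] ≤ E[W i | 𝓕 i]`. Hence `Y i`, being the maximum of `Z i`
and `E[Y (i + 1) | 𝓕 i]`, is at most `E[W i | 𝓕 i]`.
-/

open MeasureTheory Filter Finset

theorem integrable_finset_sup' {Ω ι : Type*} {m0 : MeasurableSpace Ω} {μ : Measure Ω}
    {s : Finset ι} (hs : s.Nonempty) {f : ι → Ω → ℝ} (hf : ∀ j ∈ s, Integrable (f j) μ) :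
    Integrable (fun ω => s.sup' hs (fun j => f j ω)) μ := by
  have h : Integrable (s.sup' hs f) μ :=
    Finset.sup'_induction (p := fun g => Integrable g μ) hs f (fun _ h₁ _ h₂ => h₁.sup h₂) hf
  convert h using 1
  ext ω
  rw [Finset.sup'_apply]

/-- **Dual upper bound (Rogers/Haugh–Kogan inequality).**
For every martingale `M` (with respect to the filtration `𝓕`, on the horizon `{0,…,T}`)
and every `i ≤ T`, the Snell envelope `Y` of the cash-flow `Z` satisfies
`Y i ≤ E[ max_{i ≤ j ≤ T} (Z j - M j + M i) | 𝓕 i ]` almost surely. -/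
theorem snell_le_condexp_dual_max
    {Ω : Type*} {m0 : MeasurableSpace Ω} (μ : Measure Ω) [IsProbabilityMeasure μ]
    (T : ℕ) (𝓕 : Filtration ℕ m0) (Z Y M : ℕ → Ω → ℝ)
    -- `Z` is adapted, nonnegative and integrable on the horizon
    (hZadp : ∀ i, i ≤ T → StronglyMeasurable[𝓕 i] (Z i))
    (hZnn : ∀ i, i ≤ T → 0 ≤ᵐ[μ] Z i)
    (hZint : ∀ i, i ≤ T → Integrable (Z i) μ)
    -- `Y` is the Snell envelope of `Z`, given by backward recursion
    (hYT : Y T = Z T)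
    (hYrec : ∀ i, i < T → Y i =ᵐ[μ] fun ω => max (Z i ω) ((μ[Y (i + 1)|𝓕 i]) ω))
    -- `M` is a martingale on the horizon `{0,…,T}`
    (hMadp : ∀ i, i ≤ T → StronglyMeasurable[𝓕 i] (M i))
    (hMint : ∀ i, i ≤ T → Integrable (M i) μ)
    (hMmart : ∀ i, i + 1 ≤ T → μ[M (i + 1)|𝓕 i] =ᵐ[μ] M i)
    (i : ℕ) (hi : i ≤ T) :
    Y i ≤ᵐ[μ]
      μ[fun ω => (Finset.Icc i T).sup' (Finset.nonempty_Icc.mpr hi)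
        (fun j => Z j ω - M j ω + M i ω)|𝓕 i] := by
  -- Without integrability of `Y`, the conditional expectations in `hYrec` would be junk zeros.
  have hYint : ∀ i, i ≤ T → Integrable (Y i) μ := by
    intro i hi
    rcases hi.eq_or_lt with rfl | hlt
    · exact hYT ▸ hZint i le_rfl
    · exact ((hZint i hi).sup integrable_condExp).congr (hYrec i hlt).symm
  have hWint : ∀ i (hi : i ≤ T), Integrable (fun ω => (Finset.Icc i T).sup'
      (Finset.nonempty_Icc.mpr hi) (fun j => Z j ω - M j ω + M i ω)) μ := by
    intro i hi
    refine integrable_finset_sup' (f := fun j ω => Z j ω - M j ω + M i ω) _ fun j hj => ?_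
    have hjT := (Finset.mem_Icc.mp hj).2
    exact ((hZint j hjT).sub (hMint j hjT)).add (hMint i hi)
  -- `j = i` is always an admissible index, so `Z i` is dominated, including at `i = T`.
  have hZle : ∀ i (hi : i ≤ T), Z i ≤ᵐ[μ] μ[fun ω => (Finset.Icc i T).sup'
      (Finset.nonempty_Icc.mpr hi) (fun j => Z j ω - M j ω + M i ω)|𝓕 i] := by
    intro i hi
    have h := condExp_mono (m := 𝓕 i) (hZint i hi) (hWint i hi) (ae_of_all μ fun ω => by
      have := Finset.le_sup' (fun j => Z j ω - M j ω + M i ω) (Finset.left_mem_Icc.mpr hi)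
      simpa only [sub_add_cancel] using this)
    rwa [condExp_of_stronglyMeasurable (𝓕.le i) (hZadp i hi) (hZint i hi)] at h
  induction hi using Nat.decreasingInduction with
  | self => rw [hYT]; exact hZle T le_rfl
  | of_succ i hlt ih =>
    have hi1 : i + 1 ≤ T := hlt
    have hi : i ≤ T := hlt.le
    have hinc : Integrable (M i - M (i + 1)) μ := (hMint i hi).sub (hMint (i + 1) hi1)
    have hstep := condExp_mono (m := 𝓕 i) ((hWint (i + 1) hi1).add hinc) (hWint i hi)
      (ae_of_all μ fun ω => by
        change _ + (M i ω - M (i + 1) ω) ≤ _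
        rw [← le_sub_iff_add_le]
        refine Finset.sup'_le _ _ fun j hj => ?_
        have hj' : j ∈ Finset.Icc i T := Finset.Icc_subset_Icc_left i.le_succ hj
        have := Finset.le_sup' (fun j => Z j ω - M j ω + M i ω) hj'
        linarith)
    have hadd := condExp_add (hWint (i + 1) hi1) hinc (𝓕 i)
    have hsub := condExp_sub (hMint i hi) (hMint (i + 1) hi1) (𝓕 i)
    rw [condExp_of_stronglyMeasurable (𝓕.le i) (hMadp i hi) (hMint i hi)] at hsub
    have hmono := condExp_mono (m := 𝓕 i) (hYint (i + 1) hi1) integrable_condExp ih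
    have htower := condExp_condExp_of_le (μ := μ) (f := fun ω => (Finset.Icc (i + 1) T).sup'
      (Finset.nonempty_Icc.mpr hi1) (fun j => Z j ω - M j ω + M (i + 1) ω))
      (𝓕.mono i.le_succ) (𝓕.le (i + 1))
    filter_upwards [hYrec i hlt, hZle i hi, hstep, hadd, hsub, hmono, htower, hMmart i hi1]
      with ω h1 h2 h3 h4 h5 h6 h7 h8
    rw [h1]
    refine max_le h2 ?_
    simp only [Pi.add_apply, Pi.sub_apply] at h4 h5
    linarith
end

section
/- Let M* be the martingale part of the Doob decomposition of the Snell envelope, i.e. M*_j = Σ_{l=1}^{j} (Y*_l − E[Y*_l | 𝓕_{l−1}]). Then for every i ∈ {0,…,T}, almost surely Y*_i = max_{i≤j≤T} (Z_j − M*_j + M*_i); in particular, for i = 0, Y*_0 = max_{0≤j≤T}(Z_j − M*_j) almost surely. -/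
/-!
The identity holds path by path. Since `Mstar (k + 1) - Mstar k = Y (k + 1) - E[Y (k + 1) | 𝓕 k]`,
subtracting `Mstar k` from the Snell recursion removes the conditional expectation: almost surely,
`Y k - Mstar k = max (Z k - Mstar k) (Y (k + 1) - Mstar (k + 1))` for all `k < T`, and
`Y T - Mstar T = Z T - Mstar T`. A real sequence obeying such a recursion is the running backward
maximum (`eq_sup'_Icc_of_max_rec`); adding the constant `Mstar i` gives the claim.
-/

open MeasureTheory Filter Finset

theorem eq_sup'_Icc_of_max_rec {T : ℕ} {U V : ℕ → ℝ} (hT : U T = V T)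
    (hrec : ∀ k, k < T → U k = max (V k) (U (k + 1))) (i : ℕ) (hi : i ≤ T) :
    U i = (Finset.Icc i T).sup' (Finset.nonempty_Icc.mpr hi) V := by
  induction hi using Nat.decreasingInduction with
  | self => simpa using hT
  | of_succ k hk ih =>
    rw [hrec k hk, ih, ← Finset.sup'_insert]
    congr 1
    ext j
    simp only [Finset.mem_insert, Finset.mem_Icc]
    omega

/-- **Almost sure optimality of the Doob martingale.**
Let `Mstar` be the martingale part of the Doob decomposition of the Snell envelope,
`Mstar j = ∑_{l=1}^{j} (Y l - E[Y l | 𝓕 (l-1)])`. Then for every `i ≤ T`, almost surely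
`Y i = max_{i ≤ j ≤ T} (Z j - Mstar j + Mstar i)`; in particular for `i = 0`,
`Y 0 = max_{0 ≤ j ≤ T} (Z j - Mstar j)` a.s. -/
theorem snell_eq_dual_max_doob_martingale
    {Ω : Type*} {m0 : MeasurableSpace Ω} (μ : Measure Ω) [IsProbabilityMeasure μ]
    (T : ℕ) (𝓕 : Filtration ℕ m0) (Z Y Mstar : ℕ → Ω → ℝ)
    -- `Z` is adapted, nonnegative and integrable on the horizon
    (hZadp : ∀ i, i ≤ T → StronglyMeasurable[𝓕 i] (Z i))
    (hZnn : ∀ i, i ≤ T → 0 ≤ᵐ[μ] Z i)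
    (hZint : ∀ i, i ≤ T → Integrable (Z i) μ)
    -- `Y` is the Snell envelope of `Z`, given by backward recursion
    (hYT : Y T = Z T)
    (hYrec : ∀ i, i < T → Y i =ᵐ[μ] fun ω => max (Z i ω) ((μ[Y (i + 1)|𝓕 i]) ω))
    -- `Mstar` is the Doob martingale part of `Y`
    (hMstar : ∀ j, Mstar j = fun ω => ∑ l ∈ Finset.Icc 1 j, (Y l ω - (μ[Y l|𝓕 (l - 1)]) ω))
    (i : ℕ) (hi : i ≤ T) :
    Y i =ᵐ[μ]
      fun ω => (Finset.Icc i T).sup' (Finset.nonempty_Icc.mpr hi)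
        (fun j => Z j ω - Mstar j ω + Mstar i ω) := by
  have hrec : ∀ᵐ ω ∂μ, ∀ k, k < T → Y k ω = max (Z k ω) ((μ[Y (k + 1)|𝓕 k]) ω) := by
    rw [ae_all_iff]
    intro k
    by_cases hk : k < T
    · filter_upwards [hYrec k hk] with ω hω _ using hω
    · exact ae_of_all _ fun ω h => absurd h hk
  filter_upwards [hrec] with ω hω
  have h := eq_sup'_Icc_of_max_rec (T := T) (U := fun j => Y j ω - Mstar j ω + Mstar i ω)
    (V := fun j => Z j ω - Mstar j ω + Mstar i ω) (by simp only [hYT]) ?_ i hi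
  · simpa only [sub_add_cancel] using h
  · intro k hk
    have hM : Mstar (k + 1) ω = Mstar k ω + (Y (k + 1) ω - (μ[Y (k + 1)|𝓕 k]) ω) := by
      rw [hMstar (k + 1), hMstar k]
      simp only [Finset.sum_Icc_succ_top (Nat.le_add_left 1 k), Nat.add_sub_cancel]
    have hE : Y (k + 1) ω - Mstar (k + 1) ω + Mstar i ω
        = (μ[Y (k + 1)|𝓕 k]) ω - Mstar k ω + Mstar i ω := by
      rw [hM]; ring
    simp only [hE, hω k hk, max_add_add_right, max_sub_sub_right]
end

section
/- Sure optimality at a time i does not imply sure optimality at i+1: there exist a filtered probability space, an adapted nonnegative integrable cash-flow Z with horizon T = 2, and a martingale M such that Y*_0 = max_{0≤j≤2}(Z_j − M_j + M_0) almost surely, while the event { Y*_1 = max_{1≤j≤2}(Z_j − M_j + M_1) } does not have probability one. (A witness: Z_0 = 4, Z_1 = 0, Z_2 = 2, M_0 = 0, M_1 = ±1 with probability 1/2 each, M_2 = M_1 ± 1 with conditional probability 1/2 each.) -/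
/-!
A single fair coin tossed between times `1` and `2` suffices. Take the deterministic cash-flow
`Z = (4, 0, 2)`, whose Snell envelope is the deterministic path `(4, 2, 2)`, and the martingale
`M = (0, 0, ±1)`. At time `0` immediate exercise pays `4`, which exceeds `2 - M 2 ≤ 3`, so the
noise in `M` is invisible in the maximum. At time `1` the maximum is `max 0 (2 - M 2) = 2 ∓ 1`,
which differs from `Y 1 = 2` on both outcomes.
-/

open MeasureTheory Filter Finset

/-- The law of a fair coin. -/
noncomputable def coinMeasure : Measure Bool :=
  (2⁻¹ : ENNReal) • (Measure.dirac true + Measure.dirac false)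

instance : IsProbabilityMeasure coinMeasure :=
  ⟨by simp [coinMeasure, ENNReal.inv_two_add_inv_two]⟩

lemma integral_coin : ∫ b, (if b then (1 : ℝ) else -1) ∂coinMeasure = 0 := by
  rw [coinMeasure, integral_smul_measure,
    integral_add_measure (Integrable.of_finite) (Integrable.of_finite)]
  simp

/-- The outcome `true` is an atom, so almost sure properties hold there. -/
lemma ae_coin {p : Bool → Prop} (h : ∀ᵐ b ∂coinMeasure, p b) : p true := by
  have h2 : ∀ᵐ b ∂(Measure.dirac true + Measure.dirac false : Measure Bool), p b :=
    (Measure.ae_ennreal_smul_measure_iff (by simp)).1 h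
  have h3 := (ae_add_measure_iff.1 h2).1
  simpa [ae_dirac_eq] using h3

/-- The filtration of a coin whose outcome is revealed at time `2`. -/
def coinFiltration : Filtration ℕ (⊤ : MeasurableSpace Bool) where
  seq i := if i < 2 then ⊥ else ⊤
  mono' i j hij := by
    dsimp only
    split_ifs with h1 h2
    · exact le_rfl
    · exact bot_le
    · omega
    · exact le_rfl
  le' _ := le_top

/-- The martingale `(0, 0, ±1)`, frozen after time `2`. -/
def coinMartingale (i : ℕ) (b : Bool) : ℝ := if i < 2 then 0 else if b then 1 else -1

/-- **Sure optimality at time `i` does not imply sure optimality at `i + 1`.**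
There exist a filtered probability space, an adapted nonnegative integrable cash-flow `Z`
with horizon `T = 2` and Snell envelope `Y`, and a martingale `M` such that
`Y 0 = max_{0 ≤ j ≤ 2} (Z j - M j + M 0)` a.s. (sure optimality at `i = 0`), while
`Y 1 = max_{1 ≤ j ≤ 2} (Z j - M j + M 1)` fails to hold almost surely. -/
theorem exists_martingale_surelyOptimal_at_zero_not_at_one :
    ∃ (Ω : Type) (m0 : MeasurableSpace Ω) (μ : Measure Ω) (_ : IsProbabilityMeasure μ)
      (𝓕 : Filtration ℕ m0) (Z Y M : ℕ → Ω → ℝ),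
      -- `Z` is adapted, nonnegative and integrable on the horizon `{0, 1, 2}`
      (∀ i, i ≤ 2 → StronglyMeasurable[𝓕 i] (Z i)) ∧
      (∀ i, i ≤ 2 → 0 ≤ᵐ[μ] Z i) ∧
      (∀ i, i ≤ 2 → Integrable (Z i) μ) ∧
      -- `Y` is the Snell envelope of `Z`
      Y 2 = Z 2 ∧
      (∀ i, i < 2 → Y i =ᵐ[μ] fun ω => max (Z i ω) ((μ[Y (i + 1)|𝓕 i]) ω)) ∧
      -- `M` is a martingale on the horizon `{0, 1, 2}`
      (∀ i, i ≤ 2 → StronglyMeasurable[𝓕 i] (M i)) ∧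
      (∀ i, i ≤ 2 → Integrable (M i) μ) ∧
      (∀ i, i + 1 ≤ 2 → μ[M (i + 1)|𝓕 i] =ᵐ[μ] M i) ∧
      -- `M` is surely optimal at `i = 0` …
      (Y 0 =ᵐ[μ]
        fun ω => (Finset.Icc 0 2).sup' (Finset.nonempty_Icc.mpr (Nat.zero_le 2))
          (fun j => Z j ω - M j ω + M 0 ω)) ∧
      -- … but not at `i = 1`
      ¬ (Y 1 =ᵐ[μ]
        fun ω => (Finset.Icc 1 2).sup' (Finset.nonempty_Icc.mpr (by norm_num))
          (fun j => Z j ω - M j ω + M 1 ω)) := by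
  refine ⟨Bool, ⊤, coinMeasure, inferInstance, coinFiltration,
    fun i _ => if i = 0 then 4 else if i = 1 then 0 else 2,
    fun i _ => if i = 0 then 4 else 2, coinMartingale,
    fun i _ => stronglyMeasurable_const, fun i _ => Eventually.of_forall fun _ => ?_,
    fun i _ => integrable_const _, by simp, fun i hi => ?_, fun i hi => ?_,
    fun i _ => Integrable.of_finite, fun i hi => ?_, Eventually.of_forall fun b => ?_,
    fun h => ?_⟩
  · dsimp only [Pi.zero_apply]
    split_ifs <;> norm_num
  · refine Eventually.of_forall fun b => ?_
    dsimp only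
    rw [condExp_const (coinFiltration.le i)]
    interval_cases i <;> norm_num
  · by_cases h : i < 2
    · have : coinMartingale i = fun _ => 0 := by funext b; simp [coinMartingale, h]
      rw [this]
      exact stronglyMeasurable_const
    · have : coinFiltration i = ⊤ := if_neg h
      rw [this]
      exact StronglyMeasurable.of_discrete
  · have hbot : coinFiltration i = ⊥ := if_pos (by omega)
    rw [hbot, condExp_bot]
    refine Eventually.of_forall fun b => ?_
    have hi' : i < 2 := by omega
    interval_cases i
    · simp [coinMartingale]
    · simpa [coinMartingale] using integral_coin
  · have hI : Finset.Icc 0 2 = {0, 1, 2} := rfl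
    cases b <;> simp [hI, coinMartingale] <;> norm_num
  · have hI : Finset.Icc 1 2 = {1, 2} := rfl
    have := ae_coin h
    simp [hI, coinMartingale] at this
    norm_num at this
end

section
/- (Characterization of surely optimal martingales, necessity.) Let M be a martingale with M_0 = 0 which is surely optimal at every i = 0,…,T. Then there exists a sequence of adapted, integrable random variables (ζ_i)_{0<i≤T} with ζ_i ≥ 0 a.s. and E[ζ_i | 𝓕_{i−1}] = 1 a.s. for all 0 < i ≤ T, such that for every i, M_i = M*_i − A*_i + Σ_{l=1}^{i} (A*_l − A*_{l−1}) ζ_l almost surely, where M* and A* are the martingale part and the predictable part of the Doob decomposition of the Snell envelope Y*. -/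
open MeasureTheory Filter Finset

/-!
Write `D i = Y i - Y (i + 1) + M (i + 1) - M i`. Comparing sure optimality at `i` and `i + 1`
shows `Y i ≥ Y (i + 1) - M (i + 1) + M i`, that is `D i ≥ 0`, and the martingale property gives
`μ[D i|𝓕 i] = Y i - μ[Y (i + 1)|𝓕 i] = Astar (i + 1) - Astar i`. A nonnegative integrable variable
`D` always factors as `D = μ[D|m] * ζ` with `ζ ≥ 0` and `μ[ζ|m] = 1`
(`exists_condExp_factor`), and summing
`M (i + 1) - M i = (Y (i + 1) - Y i) + (Astar (i + 1) - Astar i) * ζ (i + 1)` yields the claim,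
because `Y (i + 1) - Y i` is the increment of `Mstar - Astar`.
-/

/-- For nonnegative `D`, the `[0, ∞]`-valued integrals of `f * D` and `f * μ[D|m]` agree for every
nonnegative `m`-measurable `f`, with no integrability condition on the products: the measures with
densities `D` and `μ[D|m]` coincide on `m`. -/
lemma lintegral_mul_condExp_eq {Ω : Type*} {m m0 : MeasurableSpace Ω} {μ : Measure Ω}
    [IsProbabilityMeasure μ] (hm : m ≤ m0) {D : Ω → ℝ} (hD : Integrable D μ) (hD0 : 0 ≤ᵐ[μ] D)
    {f : Ω → ENNReal} (hf : Measurable[m] f) :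
    ∫⁻ ω, f ω * ENNReal.ofReal (D ω) ∂μ = ∫⁻ ω, f ω * ENNReal.ofReal ((μ[D|m]) ω) ∂μ := by
  have ha0 : 0 ≤ᵐ[μ] μ[D|m] := condExp_nonneg hD0
  have htrim : (μ.withDensity fun ω => ENNReal.ofReal (D ω)).trim hm
      = (μ.withDensity fun ω => ENNReal.ofReal ((μ[D|m]) ω)).trim hm := by
    refine @Measure.ext _ m _ _ fun s hs => ?_
    rw [trim_measurableSet_eq hm hs, trim_measurableSet_eq hm hs,
      withDensity_apply _ (hm s hs), withDensity_apply _ (hm s hs),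
      ← ofReal_integral_eq_lintegral_ofReal hD.integrableOn (ae_restrict_of_ae hD0),
      ← ofReal_integral_eq_lintegral_ofReal integrable_condExp.integrableOn
        (ae_restrict_of_ae ha0), setIntegral_condExp hm hD hs]
  have hf0 : AEMeasurable f μ := (hf.mono hm le_rfl).aemeasurable
  have key := congrArg (fun ν => @lintegral Ω m ν f) htrim
  simp only [lintegral_trim hm hf] at key
  rw [lintegral_withDensity_eq_lintegral_mul₀ hD.aemeasurable.ennreal_ofReal hf0,
    lintegral_withDensity_eq_lintegral_mul₀ integrable_condExp.aemeasurable.ennreal_ofReal hf0]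
    at key
  simpa only [Pi.mul_apply, mul_comm] using key

/-- A nonnegative integrable `D` is the product of `μ[D|m]` and a nonnegative variable with
conditional expectation one. -/
lemma exists_condExp_factor {Ω : Type*} {m m1 m0 : MeasurableSpace Ω} {μ : Measure Ω}
    [IsProbabilityMeasure μ] (hm : m ≤ m1) (hm1 : m1 ≤ m0) {D : Ω → ℝ}
    (hDm : AEStronglyMeasurable[m1] D μ) (hD : Integrable D μ) (hD0 : 0 ≤ᵐ[μ] D) :
    ∃ ζ : Ω → ℝ, StronglyMeasurable[m1] ζ ∧ Integrable ζ μ ∧ 0 ≤ᵐ[μ] ζ ∧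
      μ[ζ|m] =ᵐ[μ] (fun _ => 1) ∧ D =ᵐ[μ] fun ω => (μ[D|m]) ω * ζ ω := by
  have hmm0 := hm.trans hm1
  obtain ⟨D', hD'm, hDD'⟩ := hDm
  set a : Ω → ℝ := μ[D|m] with ha
  have ham : StronglyMeasurable[m] a := stronglyMeasurable_condExp
  have ha0 : 0 ≤ᵐ[μ] a := condExp_nonneg hD0
  have hDint' : Integrable D' μ := hD.congr hDD'
  have hD'0 : 0 ≤ᵐ[μ] D' := by
    filter_upwards [hD0, hDD'] with ω h1 h2
    rwa [← h2]
  have haD' : μ[D'|m] =ᵐ[μ] a := (condExp_congr_ae hDD').symm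
  have hinvm : StronglyMeasurable[m] (fun ω => (a ω)⁻¹) :=
    (Measurable.inv ham.measurable).stronglyMeasurable
  set s : Set Ω := {ω | a ω = 0} with hs_def
  have hs : MeasurableSet[m] s := ham.measurable (measurableSet_singleton 0)
  -- `D` vanishes where its conditional expectation does.
  have hzero : ∀ᵐ ω ∂μ, a ω = 0 → D ω = 0 := by
    have h1 : ∫ ω in s, D ω ∂μ = 0 := by
      rw [← setIntegral_condExp hmm0 hD hs]
      exact setIntegral_eq_zero_of_forall_eq_zero fun ω hω => hω
    have h2 := (setIntegral_eq_zero_iff_of_nonneg_ae (ae_restrict_of_ae hD0)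
      hD.integrableOn).1 h1
    exact (ae_restrict_iff' (hmm0 s hs)).1 h2
  have hprod : Integrable ((fun ω => (a ω)⁻¹) * D') μ := by
    refine ⟨((hinvm.mono hmm0).mul (hD'm.mono hm1)).aestronglyMeasurable, ?_⟩
    have hnn : 0 ≤ᵐ[μ] (fun ω => (a ω)⁻¹) * D' := by
      filter_upwards [ha0, hD'0] with ω h1 h2
      exact mul_nonneg (inv_nonneg.2 h1) h2
    rw [hasFiniteIntegral_iff_ofReal hnn]
    calc ∫⁻ ω, ENNReal.ofReal (((fun ω => (a ω)⁻¹) * D') ω) ∂μ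
        = ∫⁻ ω, ENNReal.ofReal (a ω)⁻¹ * ENNReal.ofReal (D ω) ∂μ := by
          refine lintegral_congr_ae ?_
          filter_upwards [ha0, hDD'] with ω h1 h2
          rw [h2, ← ENNReal.ofReal_mul (inv_nonneg.2 h1)]
          rfl
      _ = ∫⁻ ω, ENNReal.ofReal (a ω)⁻¹ * ENNReal.ofReal (a ω) ∂μ :=
          lintegral_mul_condExp_eq hmm0 hD hD0 hinvm.measurable.ennreal_ofReal
      _ ≤ ∫⁻ _, 1 ∂μ := by
          refine lintegral_mono_ae ?_
          filter_upwards [ha0] with ω h1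
          rw [← ENNReal.ofReal_mul (inv_nonneg.2 h1)]
          exact ENNReal.ofReal_le_one.2 (inv_mul_le_one)
      _ < ⊤ := by simp
  -- The real inverse of `0` is `0`, so the first summand vanishes on `s`, where the factor is `1`.
  have hind : StronglyMeasurable[m] (s.indicator fun _ => (1 : ℝ)) :=
    stronglyMeasurable_const.indicator hs
  have hindint : Integrable (s.indicator fun _ => (1 : ℝ)) μ :=
    (integrable_const 1).indicator (hmm0 s hs)
  refine ⟨(fun ω => (a ω)⁻¹) * D' + s.indicator fun _ => 1,
    ((hinvm.mono hm).mul hD'm).add (hind.mono hm), hprod.add hindint, ?_, ?_, ?_⟩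
  · filter_upwards [ha0, hD'0] with ω h1 h2
    exact add_nonneg (mul_nonneg (inv_nonneg.2 h1) h2)
      (Set.indicator_nonneg (fun _ _ => zero_le_one) ω)
  · have h3 := condExp_mul_of_stronglyMeasurable_left (μ := μ) hinvm hprod hDint'
    filter_upwards [condExp_add hprod hindint m, h3, haD'] with ω h4 h5 h6
    rw [h4, Pi.add_apply, h5, Pi.mul_apply, h6,
      condExp_of_stronglyMeasurable hmm0 hind hindint]
    by_cases h : a ω = 0
    · simp [hs_def, h]
    · simp [hs_def, h]
  · filter_upwards [hzero, hDD'] with ω h1 h2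
    by_cases h : a ω = 0
    · simp [h, h1 h]
    · simp [hs_def, h, h2]

/-- **Characterization of surely optimal martingales — necessity.**
Let `M` be a martingale with `M 0 = 0` which is surely optimal at every `i = 0, …, T`.
Then there exists a sequence of adapted, integrable random variables `ζ i` (`0 < i ≤ T`)
with `ζ i ≥ 0` a.s. and `E[ζ i | 𝓕 (i-1)] = 1` a.s., such that for every `i ≤ T`,
`M i = Mstar i - Astar i + ∑_{l=1}^{i} (Astar l - Astar (l-1)) * ζ l` almost surely,
where `Mstar`, `Astar` are the martingale and predictable parts of the Doob decomposition
of the Snell envelope `Y`. -/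
theorem surelyOptimal_martingale_characterization_necessity
    {Ω : Type*} {m0 : MeasurableSpace Ω} (μ : Measure Ω) [IsProbabilityMeasure μ]
    (T : ℕ) (𝓕 : Filtration ℕ m0) (Z Y M Mstar Astar : ℕ → Ω → ℝ)
    -- `Z` is adapted, nonnegative and integrable on the horizon
    (hZadp : ∀ i, i ≤ T → StronglyMeasurable[𝓕 i] (Z i))
    (hZnn : ∀ i, i ≤ T → 0 ≤ᵐ[μ] Z i)
    (hZint : ∀ i, i ≤ T → Integrable (Z i) μ)
    -- `Y` is the Snell envelope of `Z`, given by backward recursion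
    (hYT : Y T = Z T)
    (hYrec : ∀ i, i < T → Y i =ᵐ[μ] fun ω => max (Z i ω) ((μ[Y (i + 1)|𝓕 i]) ω))
    -- Doob decomposition of `Y`: martingale part `Mstar` and predictable part `Astar`
    (hMstar : ∀ j, Mstar j = fun ω => ∑ l ∈ Finset.Icc 1 j, (Y l ω - (μ[Y l|𝓕 (l - 1)]) ω))
    (hAstar : ∀ j, Astar j = fun ω => ∑ l ∈ Finset.Icc 1 j, (Y (l - 1) ω - (μ[Y l|𝓕 (l - 1)]) ω))
    -- `M` is a martingale on the horizon with `M 0 = 0`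
    (hMadp : ∀ i, i ≤ T → StronglyMeasurable[𝓕 i] (M i))
    (hMint : ∀ i, i ≤ T → Integrable (M i) μ)
    (hMmart : ∀ i, i + 1 ≤ T → μ[M (i + 1)|𝓕 i] =ᵐ[μ] M i)
    (hM0 : M 0 = 0)
    -- `M` is surely optimal at every `i = 0, …, T`
    (hopt : ∀ i, ∀ hi : i ≤ T,
      Y i =ᵐ[μ] fun ω => (Finset.Icc i T).sup' (Finset.nonempty_Icc.mpr hi)
        (fun j => Z j ω - M j ω + M i ω)) :
    ∃ ζ : ℕ → Ω → ℝ,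
      (∀ i, 1 ≤ i → i ≤ T →
        StronglyMeasurable[𝓕 i] (ζ i) ∧ Integrable (ζ i) μ ∧
        (0 ≤ᵐ[μ] ζ i) ∧ (μ[ζ i|𝓕 (i - 1)] =ᵐ[μ] fun _ => 1)) ∧
      (∀ i, i ≤ T →
        M i =ᵐ[μ] fun ω =>
          Mstar i ω - Astar i ω + ∑ l ∈ Finset.Icc 1 i, (Astar l ω - Astar (l - 1) ω) * ζ l ω) := by
  have hYm : ∀ i, i ≤ T → AEStronglyMeasurable[𝓕 i] (Y i) μ ∧ Integrable (Y i) μ := by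
    intro i hi
    rcases hi.lt_or_eq with h | rfl
    · have h1 : StronglyMeasurable[𝓕 i] (fun ω => max (Z i ω) ((μ[Y (i + 1)|𝓕 i]) ω)) :=
        @StronglyMeasurable.sup Ω ℝ _ _ (𝓕 i) _ _ _ (hZadp i hi) stronglyMeasurable_condExp
      have h2 : Integrable (fun ω => max (Z i ω) ((μ[Y (i + 1)|𝓕 i]) ω)) μ :=
        (hZint i hi).sup integrable_condExp
      exact ⟨⟨_, h1, hYrec i h⟩, h2.congr (hYrec i h).symm⟩
    · rw [hYT]
      exact ⟨(hZadp i hi).aestronglyMeasurable, hZint i hi⟩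
  have hfac : ∀ i, i < T → ∃ ζ : Ω → ℝ, StronglyMeasurable[𝓕 (i + 1)] ζ ∧ Integrable ζ μ ∧
      0 ≤ᵐ[μ] ζ ∧ μ[ζ|𝓕 i] =ᵐ[μ] (fun _ => 1) ∧
      (fun ω => Y i ω - Y (i + 1) ω + (M (i + 1) ω - M i ω)) =ᵐ[μ]
        fun ω => (Y i ω - (μ[Y (i + 1)|𝓕 i]) ω) * ζ ω := by
    intro i hi
    have hle : 𝓕 i ≤ 𝓕 (i + 1) := 𝓕.mono (Nat.le_succ i)
    obtain ⟨hY0m, hY0⟩ := hYm i hi.le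
    obtain ⟨hY1m, hY1⟩ := hYm (i + 1) hi
    have hM0' := hMint i hi.le
    have hM1 := hMint (i + 1) hi
    have hDint : Integrable (Y i - Y (i + 1) + (M (i + 1) - M i)) μ :=
      (hY0.sub hY1).add (hM1.sub hM0')
    have hDm : AEStronglyMeasurable[𝓕 (i + 1)] (Y i - Y (i + 1) + (M (i + 1) - M i)) μ :=
      ((hY0m.mono hle).sub hY1m).add
        ((hMadp (i + 1) hi).sub ((hMadp i hi.le).mono hle)).aestronglyMeasurable
    have hD0 : 0 ≤ᵐ[μ] Y i - Y (i + 1) + (M (i + 1) - M i) := by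
      filter_upwards [hopt i hi.le, hopt (i + 1) hi] with ω h0 h1
      -- An index attaining the maximum at time `i + 1` is a competitor at time `i`.
      obtain ⟨j, hj, hj'⟩ := Finset.exists_mem_eq_sup' (Finset.nonempty_Icc.mpr hi)
        (fun j => Z j ω - M j ω + M (i + 1) ω)
      have hj2 : j ∈ Finset.Icc i T := by
        simp only [Finset.mem_Icc] at hj ⊢
        omega
      have h2 := Finset.le_sup' (fun j => Z j ω - M j ω + M i ω) hj2
      rw [← h0] at h2
      rw [hj'] at h1
      simp only [Pi.zero_apply, Pi.add_apply, Pi.sub_apply]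
      linarith
    have hcond : μ[Y i - Y (i + 1) + (M (i + 1) - M i)|𝓕 i] =ᵐ[μ]
        fun ω => Y i ω - (μ[Y (i + 1)|𝓕 i]) ω := by
      have hYself := condExp_of_aestronglyMeasurable' (𝓕.le i) hY0m hY0
      have hMself := condExp_of_stronglyMeasurable (𝓕.le i) (hMadp i hi.le) hM0'
      filter_upwards [condExp_add (hY0.sub hY1) (hM1.sub hM0') (𝓕 i),
        condExp_sub hY0 hY1 (𝓕 i), condExp_sub hM1 hM0' (𝓕 i), hYself, hMmart i hi]
        with ω h1 h2 h3 h4 h5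
      rw [h1, Pi.add_apply, h2, h3, Pi.sub_apply, Pi.sub_apply, h4, h5, hMself]
      ring
    obtain ⟨ζ, h1, h2, h3, h4, h5⟩ :=
      exists_condExp_factor hle (𝓕.le (i + 1)) hDm hDint hD0
    refine ⟨ζ, h1, h2, h3, h4, ?_⟩
    filter_upwards [h5, hcond] with ω h6 h7
    rw [h7] at h6
    exact h6
  choose! ζ hζ using hfac
  refine ⟨fun i => ζ (i - 1), ?_, ?_⟩
  · intro i h1 hi
    obtain ⟨k, rfl⟩ := Nat.exists_eq_add_of_le' h1
    obtain ⟨a, b, c, d, -⟩ := hζ k hi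
    exact ⟨a, b, c, d⟩
  · intro i
    induction i with
    | zero =>
      intro _
      filter_upwards with ω
      simp [hM0, hMstar, hAstar]
    | succ k ih =>
      intro hk
      filter_upwards [ih (by omega), (hζ k hk).2.2.2.2] with ω h1 h2
      have hMs : Mstar (k + 1) ω = Mstar k ω + (Y (k + 1) ω - (μ[Y (k + 1)|𝓕 k]) ω) := by
        simp only [hMstar, Finset.sum_Icc_succ_top (Nat.le_add_left 1 k), Nat.add_sub_cancel]
      have hAs : Astar (k + 1) ω = Astar k ω + (Y k ω - (μ[Y (k + 1)|𝓕 k]) ω) := by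
        simp only [hAstar, Finset.sum_Icc_succ_top (Nat.le_add_left 1 k), Nat.add_sub_cancel]
      rw [Finset.sum_Icc_succ_top (Nat.le_add_left 1 k), Nat.add_sub_cancel, hMs, hAs]
      linear_combination h1 + h2
end

section
/- If a martingale M with M_0 = 0 is surely optimal at every i = 0,…,T, then there exists a nondecreasing adapted integrable process N with N_0 = 0 (not necessarily predictable) such that Y*_i = Y*_0 + M_i − N_i almost surely for every i = 0,…,T. -/
/-! Sure optimality at `i` says that `Y i - M i` is a.s. the maximum of `Z j - M j` over
`i ≤ j ≤ T`. These are maxima over shrinking index sets, so `Y i - M i` is a.s. nonincreasing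
in `i`, and `N i = Y 0 + M i - Y i` is nondecreasing. Since `Y i` is only determined up to null
sets, the process `N` is built from the version of `Y i` given by the right-hand side of the
backward recursion, which is genuinely `𝓕 i`-measurable.
-/

open MeasureTheory Filter Finset

/-- **Surely optimal martingales give a Doob-type decomposition with adapted
(not necessarily predictable) increasing part.**
If a martingale `M` with `M 0 = 0` is surely optimal at every `i = 0, …, T`, then there exists
a nondecreasing adapted integrable process `N` with `N 0 = 0` such that
`Y i = Y 0 + M i - N i` a.s. for every `i ≤ T`. -/
theorem surelyOptimal_martingale_exists_adapted_increasing_part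
    {Ω : Type*} {m0 : MeasurableSpace Ω} (μ : Measure Ω) [IsProbabilityMeasure μ]
    (T : ℕ) (𝓕 : Filtration ℕ m0) (Z Y M : ℕ → Ω → ℝ)
    -- `Z` is adapted, nonnegative and integrable on the horizon
    (hZadp : ∀ i, i ≤ T → StronglyMeasurable[𝓕 i] (Z i))
    (hZnn : ∀ i, i ≤ T → 0 ≤ᵐ[μ] Z i)
    (hZint : ∀ i, i ≤ T → Integrable (Z i) μ)
    -- `Y` is the Snell envelope of `Z`, given by backward recursion
    (hYT : Y T = Z T)
    (hYrec : ∀ i, i < T → Y i =ᵐ[μ] fun ω => max (Z i ω) ((μ[Y (i + 1)|𝓕 i]) ω))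
    -- `M` is a martingale on the horizon with `M 0 = 0`
    (hMadp : ∀ i, i ≤ T → StronglyMeasurable[𝓕 i] (M i))
    (hMint : ∀ i, i ≤ T → Integrable (M i) μ)
    (hMmart : ∀ i, i + 1 ≤ T → μ[M (i + 1)|𝓕 i] =ᵐ[μ] M i)
    (hM0 : M 0 = 0)
    -- `M` is surely optimal at every `i = 0, …, T`
    (hopt : ∀ i, ∀ hi : i ≤ T,
      Y i =ᵐ[μ] fun ω => (Finset.Icc i T).sup' (Finset.nonempty_Icc.mpr hi)
        (fun j => Z j ω - M j ω + M i ω)) :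
    ∃ N : ℕ → Ω → ℝ,
      N 0 = 0 ∧
      (∀ i, i ≤ T → StronglyMeasurable[𝓕 i] (N i)) ∧
      (∀ i, i ≤ T → Integrable (N i) μ) ∧
      (∀ i, i + 1 ≤ T → N i ≤ᵐ[μ] N (i + 1)) ∧
      (∀ i, i ≤ T → Y i =ᵐ[μ] fun ω => Y 0 ω + M i ω - N i ω) := by
  -- The `𝓕 i`-measurable version of `Y i`; its values beyond the horizon are irrelevant.
  let V : ℕ → Ω → ℝ := fun i =>
    if i < T then fun ω => max (Z i ω) ((μ[Y (i + 1)|𝓕 i]) ω) else Z i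
  have hV : ∀ i, i ≤ T → Y i =ᵐ[μ] V i := by
    intro i hi
    rcases hi.lt_or_eq with h | rfl
    · simpa only [V, if_pos h] using hYrec i h
    · simp only [V, lt_irrefl, if_false, hYT]
      exact EventuallyEq.rfl
  have hVmeas : ∀ i, i ≤ T → StronglyMeasurable[𝓕 i] (V i) := by
    intro i hi
    by_cases h : i < T
    · simp only [V, if_pos h]
      exact @StronglyMeasurable.sup Ω ℝ _ _ (𝓕 i) _ _ _ (hZadp i hi) stronglyMeasurable_condExp
    · simpa only [V, if_neg h] using hZadp i hi
  have hVint : ∀ i, i ≤ T → Integrable (V i) μ := by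
    intro i hi
    by_cases h : i < T
    · simp only [V, if_pos h]
      exact (hZint i hi).sup integrable_condExp
    · simpa only [V, if_neg h] using hZint i hi
  refine ⟨fun i ω => V 0 ω + M i ω - V i ω, ?_, ?_, ?_, ?_, ?_⟩
  · funext ω
    simp [hM0]
  · intro i hi
    exact ((((hVmeas 0 (Nat.zero_le T)).mono (𝓕.mono (Nat.zero_le i))).add (hMadp i hi)).sub
      (hVmeas i hi))
  · intro i hi
    exact ((hVint 0 (Nat.zero_le T)).add (hMint i hi)).sub (hVint i hi)
  · intro i hi
    have hi' : i ≤ T := (Nat.le_succ i).trans hi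
    filter_upwards [hV i hi', hV (i + 1) hi, hopt i hi', hopt (i + 1) hi] with ω h1 h2 h3 h4
    obtain ⟨j, hj, hjeq⟩ := Finset.exists_mem_eq_sup' (Finset.nonempty_Icc.mpr hi)
      (fun j => Z j ω - M j ω + M (i + 1) ω)
    rw [hjeq] at h4
    rw [Finset.mem_Icc] at hj
    -- The index attaining the maximum at time `i + 1` still competes at time `i`.
    have hle : Z j ω - M j ω + M i ω ≤ Y i ω := by
      rw [h3]
      exact Finset.le_sup' (fun j => Z j ω - M j ω + M i ω)
        (Finset.mem_Icc.mpr ⟨by omega, hj.2⟩)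
    linarith
  · intro i hi
    filter_upwards [hV i hi, hV 0 (Nat.zero_le T)] with ω h1 h2
    linarith
end

section
/- Let M be a martingale with M_0 = 0 and suppose there exists a nondecreasing adapted integrable process N with N_0 = 0 such that Y*_i = Y*_0 + M_i − N_i almost surely for every i = 0,…,T. Then M is surely optimal at every i = 0,…,T, i.e. Y*_i = max_{i≤j≤T}(Z_j − M_j + M_i) almost surely for every i. -/
open MeasureTheory Filter Finset

/-!
Write `N (i + 1) - N i ≥ 0` for the increment of `N`. The decomposition turns
`μ[Y (i + 1)|𝓕 i]` into `Y i - (μ[N (i + 1)|𝓕 i] - N i)`, so wherever `Y i` exceeds `Z i` the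
recursion forces the conditional expectation of the increment to vanish. A nonnegative integrable
function vanishes almost everywhere on the set where its conditional expectation does
(`ae_eq_zero_of_condExp_eq_zero`), so `N` does not grow while `Y` stays strictly above `Z`
(`increment_eq_zero`).

The rest is pathwise (`eq_sup'_of_step`): `Y - M = Y 0 - N` is nonincreasing and dominates `Z - M`,
and it is constant from time `i` up to the first `j ≥ i` with `Y j = Z j`, where the maximum is
attained. Such a `j` exists since `Y T = Z T`.
-/

lemma ae_eq_zero_of_condExp_eq_zero {Ω : Type*} {m m0 : MeasurableSpace Ω} {μ : Measure Ω}
    [IsProbabilityMeasure μ] (hm : m ≤ m0) {f : Ω → ℝ} (hf : Integrable f μ) (hf0 : 0 ≤ᵐ[μ] f) :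
    ∀ᵐ ω ∂μ, (μ[f|m]) ω = 0 → f ω = 0 := by
  have hB : MeasurableSet[m] {ω | (μ[f|m]) ω = 0} :=
    stronglyMeasurable_condExp.measurable (measurableSet_singleton 0)
  have hint : ∫ ω in {ω | (μ[f|m]) ω = 0}, f ω ∂μ = 0 := by
    rw [← setIntegral_condExp hm hf hB]
    exact setIntegral_eq_zero_of_forall_eq_zero fun ω hω => hω
  rw [setIntegral_eq_zero_iff_of_nonneg_ae (ae_restrict_of_ae hf0) hf.integrableOn] at hint
  exact (ae_restrict_iff' (hm _ hB)).1 hint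

/-- While the Snell envelope lies strictly above the payoff, `N` does not increase. -/
lemma increment_eq_zero {Ω : Type*} {m m0 : MeasurableSpace Ω} {μ : Measure Ω}
    [IsProbabilityMeasure μ] (hm : m ≤ m0) {z y y' y₀ x x' n n' : Ω → ℝ}
    (hy : y =ᵐ[μ] fun ω => max (z ω) ((μ[y'|m]) ω))
    (hy₀m : AEStronglyMeasurable[m] y₀ μ) (hy₀ : Integrable y₀ μ)
    (hx' : Integrable x' μ) (hmart : μ[x'|m] =ᵐ[μ] x)
    (hnm : StronglyMeasurable[m] n) (hn : Integrable n μ) (hn' : Integrable n' μ)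
    (hmono : n ≤ᵐ[μ] n')
    (hdec : y =ᵐ[μ] fun ω => y₀ ω + x ω - n ω)
    (hdec' : y' =ᵐ[μ] fun ω => y₀ ω + x' ω - n' ω) :
    ∀ᵐ ω ∂μ, y ω = z ω ∨ n' ω = n ω := by
  have hzero := ae_eq_zero_of_condExp_eq_zero hm (hn'.sub hn)
    (by filter_upwards [hmono] with ω h using sub_nonneg.2 h)
  have hcond : μ[y'|m] =ᵐ[μ] μ[y₀ + x' - n'|m] := condExp_congr_ae hdec'
  have h₀ : μ[y₀|m] =ᵐ[μ] y₀ := condExp_of_aestronglyMeasurable' hm hy₀m hy₀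
  have hnn : μ[n|m] = n := condExp_of_stronglyMeasurable hm hnm hn
  filter_upwards [hzero, hcond, h₀, hy, hdec, hmart, condExp_sub (hy₀.add hx') hn' m,
    condExp_add hy₀ hx' m, condExp_sub hn' hn m] with ω hzero hcond h₀ hy hdec hmart h1 h2 h3
  simp only [Pi.sub_apply, Pi.add_apply, hnn] at hzero h1 h2 h3
  rcases max_cases (z ω) ((μ[y'|m]) ω) with h | h
  · exact Or.inl (hy.trans h.1)
  · exact Or.inr (sub_eq_zero.1 (hzero (by linarith [h.1])))

/-- The pathwise argument, for a single trajectory: `y` dominates `z`, `y - x` is nonincreasing,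
and `y - x` can drop only right after a time at which `y` meets `z`. -/
lemma eq_sup'_of_step {T : ℕ} {z y x : ℕ → ℝ} (hT : y T = z T)
    (hle : ∀ i < T, z i ≤ y i)
    (hanti : ∀ i < T, y (i + 1) - x (i + 1) ≤ y i - x i)
    (hstep : ∀ i < T, y i = z i ∨ y (i + 1) - x (i + 1) = y i - x i)
    (i : ℕ) (hi : i ≤ T) :
    y i = (Finset.Icc i T).sup' (Finset.nonempty_Icc.mpr hi) (fun j => z j - x j + x i) := by
  suffices h : (∀ j ∈ Finset.Icc i T, z j - x j ≤ y i - x i) ∧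
      ∃ j ∈ Finset.Icc i T, y i - x i = z j - x j by
    obtain ⟨hub, j, hj, hjeq⟩ := h
    apply le_antisymm
    · exact (by linarith : y i ≤ z j - x j + x i).trans
        (Finset.le_sup' (fun j => z j - x j + x i) hj)
    · exact Finset.sup'_le _ _ fun k hk => by linarith [hub k hk]
  induction hi using Nat.decreasingInduction with
  | self => simp [hT]
  | of_succ i hi ih =>
    obtain ⟨hub, j, hj, hjeq⟩ := ih
    rw [Finset.mem_Icc] at hj
    constructor
    · intro k hk
      rw [Finset.mem_Icc] at hk
      rcases hk.1.eq_or_lt with rfl | hik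
      · linarith [hle i hi]
      · exact (hub k (Finset.mem_Icc.2 ⟨hik, hk.2⟩)).trans (hanti i hi)
    · rcases hstep i hi with h | h
      · exact ⟨i, Finset.mem_Icc.2 ⟨le_rfl, hi.le⟩, by rw [h]⟩
      · exact ⟨j, Finset.mem_Icc.2 ⟨by omega, hj.2⟩, by rw [← h, hjeq]⟩

/-- **Converse: an adapted Doob-type decomposition forces sure optimality.**
Let `M` be a martingale with `M 0 = 0` and suppose there exists a nondecreasing adapted
integrable process `N` with `N 0 = 0` such that `Y i = Y 0 + M i - N i` a.s. for every
`i ≤ T`. Then `M` is surely optimal at every `i = 0, …, T`, i.e.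
`Y i = max_{i ≤ j ≤ T} (Z j - M j + M i)` a.s. for every `i ≤ T`. -/
theorem surelyOptimal_of_adapted_increasing_part
    {Ω : Type*} {m0 : MeasurableSpace Ω} (μ : Measure Ω) [IsProbabilityMeasure μ]
    (T : ℕ) (𝓕 : Filtration ℕ m0) (Z Y M N : ℕ → Ω → ℝ)
    -- `Z` is adapted, nonnegative and integrable on the horizon
    (hZadp : ∀ i, i ≤ T → StronglyMeasurable[𝓕 i] (Z i))
    (hZnn : ∀ i, i ≤ T → 0 ≤ᵐ[μ] Z i)
    (hZint : ∀ i, i ≤ T → Integrable (Z i) μ)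
    -- `Y` is the Snell envelope of `Z`, given by backward recursion
    (hYT : Y T = Z T)
    (hYrec : ∀ i, i < T → Y i =ᵐ[μ] fun ω => max (Z i ω) ((μ[Y (i + 1)|𝓕 i]) ω))
    -- `M` is a martingale on the horizon with `M 0 = 0`
    (hMadp : ∀ i, i ≤ T → StronglyMeasurable[𝓕 i] (M i))
    (hMint : ∀ i, i ≤ T → Integrable (M i) μ)
    (hMmart : ∀ i, i + 1 ≤ T → μ[M (i + 1)|𝓕 i] =ᵐ[μ] M i)
    (hM0 : M 0 = 0)
    -- `N` is a nondecreasing adapted integrable process with `N 0 = 0`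
    (hN0 : N 0 = 0)
    (hNadp : ∀ i, i ≤ T → StronglyMeasurable[𝓕 i] (N i))
    (hNint : ∀ i, i ≤ T → Integrable (N i) μ)
    (hNmono : ∀ i, i + 1 ≤ T → N i ≤ᵐ[μ] N (i + 1))
    -- decomposition of the Snell envelope
    (hdec : ∀ i, i ≤ T → Y i =ᵐ[μ] fun ω => Y 0 ω + M i ω - N i ω) :
    ∀ i, ∀ hi : i ≤ T,
      Y i =ᵐ[μ] fun ω => (Finset.Icc i T).sup' (Finset.nonempty_Icc.mpr hi)
        (fun j => Z j ω - M j ω + M i ω) := by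
  -- The recursion makes `Y 0` integrable and `𝓕 0`-measurable up to a null set, even though
  -- neither is assumed.
  have hY0 : Integrable (Y 0) μ ∧ AEStronglyMeasurable[𝓕 0] (Y 0) μ := by
    rcases Nat.eq_zero_or_pos T with rfl | hT
    · rw [hYT]
      exact ⟨hZint 0 le_rfl, _, hZadp 0 le_rfl, .rfl⟩
    · exact ⟨((hZint 0 hT.le).sup integrable_condExp).congr (hYrec 0 hT).symm,
        _, @StronglyMeasurable.sup _ _ _ _ (𝓕 0) _ _ _ (hZadp 0 hT.le) stronglyMeasurable_condExp,
        hYrec 0 hT⟩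
  have hinc : ∀ᵐ ω ∂μ, ∀ i < T, Y i ω = Z i ω ∨ N (i + 1) ω = N i ω := by
    refine ae_all_iff.2 fun i => ?_
    by_cases hi : i < T
    · filter_upwards [increment_eq_zero (𝓕.le i) (hYrec i hi)
        (hY0.2.mono (𝓕.mono (Nat.zero_le i))) hY0.1 (hMint (i + 1) hi) (hMmart i hi)
        (hNadp i hi.le) (hNint i hi.le) (hNint (i + 1) hi) (hNmono i hi)
        (hdec i hi.le) (hdec (i + 1) hi)] with ω h _ using h
    · exact .of_forall fun ω h => absurd h hi
  have hle : ∀ᵐ ω ∂μ, ∀ i < T, Z i ω ≤ Y i ω := by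
    refine ae_all_iff.2 fun i => ?_
    by_cases hi : i < T
    · filter_upwards [hYrec i hi] with ω h _ using h ▸ le_max_left _ _
    · exact .of_forall fun ω h => absurd h hi
  have hmono : ∀ᵐ ω ∂μ, ∀ i < T, N i ω ≤ N (i + 1) ω := by
    refine ae_all_iff.2 fun i => ?_
    by_cases hi : i < T
    · filter_upwards [hNmono i hi] with ω h _ using h
    · exact .of_forall fun ω h => absurd h hi
  have hdec' : ∀ᵐ ω ∂μ, ∀ i ≤ T, Y i ω = Y 0 ω + M i ω - N i ω := by
    refine ae_all_iff.2 fun i => ?_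
    by_cases hi : i ≤ T
    · filter_upwards [hdec i hi] with ω h _ using h
    · exact .of_forall fun ω h => absurd h hi
  intro i hi
  filter_upwards [hinc, hle, hmono, hdec'] with ω hinc hle hmono hdec'
  refine eq_sup'_of_step (z := fun j => Z j ω) (y := fun j => Y j ω) (x := fun j => M j ω)
    (congrFun hYT ω) hle (fun k hk => ?_) (fun k hk => ?_) i hi
  · linarith [hmono k hk, hdec' k hk.le, hdec' (k + 1) hk]
  · exact (hinc k hk).imp_right fun h => by linarith [hdec' k hk.le, hdec' (k + 1) hk]
end

section
/- Let the martingale M with M_0 = 0 be surely optimal at every i = 0,…,T, and let N be the nondecreasing adapted process with N_0 = 0 satisfying Y*_i = Y*_0 + M_i − N_i a.s. Define, for 1 ≤ i ≤ T, U_i := Y*_i − M_i + M_{i−1} − Z_{i−1} (equivalently U_i = Y*_{i−1} − N_i + N_{i−1} − Z_{i−1}). Then (U_i)^+ = Y*_{i−1} − Z_{i−1} almost surely; in particular (U_i)^+ is 𝓕_{i−1}-measurable (up to a null set). -/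
/-! Sure optimality at `i` and at `i + 1` gives a pathwise recursion: splitting the term `j = i`
off the maximum at time `i` and shifting the remaining terms by `M i - M (i + 1)` yields
`Y i = max (Z i) (Y (i + 1) - M (i + 1) + M i)` almost surely, and subtracting `Z i` gives
`Y i - Z i = (U (i + 1))⁺`. The Snell recursion shows that `Y i` agrees almost surely with an
`𝓕 i`-measurable function, whence the measurability claim. -/


open MeasureTheory Filter Finset

/-- The pathwise recursion behind the result: the maximum of `z j - m j + m i` over
`i ≤ j ≤ T` in terms of the analogous maximum started at `i + 1`. -/
lemma sup'_Icc_residual (T i : ℕ) (hi : i < T) (z m : ℕ → ℝ) :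
    (Finset.Icc i T).sup' (Finset.nonempty_Icc.mpr hi.le) (fun j => z j - m j + m i) =
      max (z i) ((Finset.Icc (i + 1) T).sup' (Finset.nonempty_Icc.mpr hi)
        (fun j => z j - m j + m (i + 1)) - m (i + 1) + m i) := by
  apply le_antisymm
  · refine Finset.sup'_le _ _ fun j hj => ?_
    obtain ⟨hij, hjT⟩ := Finset.mem_Icc.mp hj
    rcases hij.eq_or_lt with rfl | hlt
    · simp
    · have h := Finset.le_sup' (fun j => z j - m j + m (i + 1))
        (Finset.mem_Icc.mpr ⟨hlt, hjT⟩ : j ∈ Finset.Icc (i + 1) T)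
      exact le_max_of_le_right (by linarith)
  · refine max_le ?_ ?_
    · have h := Finset.le_sup' (fun j => z j - m j + m i)
        (Finset.mem_Icc.mpr ⟨le_rfl, hi.le⟩ : i ∈ Finset.Icc i T)
      linarith
    · rw [← le_sub_iff_add_le, sub_le_iff_le_add]
      refine Finset.sup'_le _ _ fun j hj => ?_
      obtain ⟨hij, hjT⟩ := Finset.mem_Icc.mp hj
      have h := Finset.le_sup' (fun j => z j - m j + m i)
        (Finset.mem_Icc.mpr ⟨by lia, hjT⟩ : j ∈ Finset.Icc i T)
      linarith

/-- **The positive part of the dual residual of a surely optimal martingale is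
measurable one step earlier.**
Let `M` with `M 0 = 0` be surely optimal at every `i = 0, …, T` and set, for `i < T`,
`U (i+1) := Y (i+1) - M (i+1) + M i - Z i`. Then `(U (i+1))⁺ = Y i - Z i` almost surely;
in particular `(U (i+1))⁺` coincides a.s. with an `𝓕 i`-measurable random variable. -/
theorem surelyOptimal_posPart_residual_measurable
    {Ω : Type*} {m0 : MeasurableSpace Ω} (μ : Measure Ω) [IsProbabilityMeasure μ]
    (T : ℕ) (𝓕 : Filtration ℕ m0) (Z Y M : ℕ → Ω → ℝ)
    -- `Z` is adapted, nonnegative and integrable on the horizon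
    (hZadp : ∀ i, i ≤ T → StronglyMeasurable[𝓕 i] (Z i))
    (hZnn : ∀ i, i ≤ T → 0 ≤ᵐ[μ] Z i)
    (hZint : ∀ i, i ≤ T → Integrable (Z i) μ)
    -- `Y` is the Snell envelope of `Z`, given by backward recursion
    (hYT : Y T = Z T)
    (hYrec : ∀ i, i < T → Y i =ᵐ[μ] fun ω => max (Z i ω) ((μ[Y (i + 1)|𝓕 i]) ω))
    -- `M` is a martingale on the horizon with `M 0 = 0`
    (hMadp : ∀ i, i ≤ T → StronglyMeasurable[𝓕 i] (M i))
    (hMint : ∀ i, i ≤ T → Integrable (M i) μ)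
    (hMmart : ∀ i, i + 1 ≤ T → μ[M (i + 1)|𝓕 i] =ᵐ[μ] M i)
    (hM0 : M 0 = 0)
    -- `M` is surely optimal at every `i = 0, …, T`
    (hopt : ∀ i, ∀ hi : i ≤ T,
      Y i =ᵐ[μ] fun ω => (Finset.Icc i T).sup' (Finset.nonempty_Icc.mpr hi)
        (fun j => Z j ω - M j ω + M i ω)) :
    ∀ i, i < T →
      ((fun ω => max (Y (i + 1) ω - M (i + 1) ω + M i ω - Z i ω) 0)
          =ᵐ[μ] fun ω => Y i ω - Z i ω) ∧
      (∃ g : Ω → ℝ, StronglyMeasurable[𝓕 i] g ∧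
        (fun ω => max (Y (i + 1) ω - M (i + 1) ω + M i ω - Z i ω) 0) =ᵐ[μ] g) := by
  intro i hi
  have key : (fun ω => max (Y (i + 1) ω - M (i + 1) ω + M i ω - Z i ω) 0)
      =ᵐ[μ] fun ω => Y i ω - Z i ω := by
    filter_upwards [hopt i hi.le, hopt (i + 1) hi] with ω h0 h1
    rw [h0, sup'_Icc_residual T i hi (fun j => Z j ω) (fun j => M j ω), ← h1,
      ← max_sub_sub_right, sub_self, max_comm]
  refine ⟨key, fun ω => max (Z i ω) ((μ[Y (i + 1)|𝓕 i]) ω) - Z i ω, ?_, ?_⟩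
  · have hC : StronglyMeasurable[𝓕 i] (μ[Y (i + 1)|𝓕 i]) := stronglyMeasurable_condExp
    have hmax := continuous_max.comp_stronglyMeasurable ((hZadp i hi.le).prodMk hC)
    exact hmax.sub (hZadp i hi.le)
  · filter_upwards [key, hYrec i hi] with ω h1 h2
    rw [h1, h2]
end

section
/- Assume Z_i > 0 almost surely for all i. With M*, A* the additive Doob decomposition of Y* and N*_j = Π_{l=1}^{j} Y*_l / E[Y*_l | 𝓕_{l−1}], B*_j = Π_{l=1}^{j} E[Y*_l | 𝓕_{l−1}] / Y*_{l−1} its multiplicative decomposition (so Y*_j = Y*_0 · N*_j · B*_j), the following identity holds almost surely for every i = 0,…,T: M*_i − A*_i + Σ_{l=1}^{i} (A*_l − A*_{l−1}) · N*_l / N*_{l−1} = Y*_0 · Σ_{l=1}^{i} B*_{l−1} (N*_l − N*_{l−1}). -/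
open MeasureTheory Filter Finset

/-!
Write `e l = E[Y l | 𝓕 (l-1)]`. Both sides have the same increments: on the left the `l`-th one is
`Y l - Y (l-1) + (Y (l-1) - e l) * (Y l / e l) = Y (l-1) * (Y l / e l - 1)`, and on the right it is
`Y 0 * B (l-1) * N (l-1) * (Y l / e l - 1)`, which agrees because `Y j = Y 0 * N j * B j`.
This pathwise computation (`doob_identity_pathwise`) needs only that `Y` and `e` do not vanish.
Almost sure positivity of `Y` follows from `Y ≥ Z > 0`, and that of `e` from the fact that
conditional expectation preserves strict positivity (`condExp_pos_of_ae_pos`). The latter requires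
`Y` to be integrable, which is read off from the recursion.
-/

/-- Conditional expectation preserves almost sure strict positivity: on the `m`-measurable event
`{E[f | m] ≤ 0}` the integral of `f` is nonpositive, so that event is null. -/
lemma condExp_pos_of_ae_pos {Ω : Type*} {m m0 : MeasurableSpace Ω} {μ : Measure Ω}
    [IsProbabilityMeasure μ] (hm : m ≤ m0) {f : Ω → ℝ} (hf : Integrable f μ)
    (hpos : ∀ᵐ ω ∂μ, 0 < f ω) : ∀ᵐ ω ∂μ, 0 < (μ[f|m]) ω := by
  have hA : MeasurableSet[m] {ω | (μ[f|m]) ω ≤ 0} := by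
    have h : Measurable[m] (μ[f|m]) := stronglyMeasurable_condExp.measurable
    exact h measurableSet_Iic
  have hle : ∫ ω in {ω | (μ[f|m]) ω ≤ 0}, f ω ∂μ ≤ 0 := by
    rw [← setIntegral_condExp hm hf hA]
    exact setIntegral_nonpos (hm _ hA) fun ω hω => hω
  have hnn : 0 ≤ᵐ[μ.restrict {ω | (μ[f|m]) ω ≤ 0}] f :=
    ae_restrict_of_ae (hpos.mono fun ω h => h.le)
  have hzero := (integral_eq_zero_iff_of_nonneg_ae hnn hf.integrableOn).1
    (le_antisymm hle (integral_nonneg_of_ae hnn))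
  have hzero' := (ae_restrict_iff' (hm _ hA)).1 hzero
  filter_upwards [hpos, hzero'] with ω h1 h2
  by_contra h
  exact h1.ne' (h2 (not_lt.1 h))

/-- The multiplicative decomposition `y j = y 0 * N j * B j` along a single path. -/
lemma mul_doob_pathwise (y e : ℕ → ℝ) (n : ℕ) (hy : ∀ l ≤ n, y l ≠ 0)
    (he : ∀ l, 1 ≤ l → l ≤ n → e l ≠ 0) :
    y 0 * (∏ l ∈ Finset.Icc 1 n, y l / e l) * (∏ l ∈ Finset.Icc 1 n, e l / y (l - 1)) = y n := by
  induction n with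
  | zero => simp
  | succ n ih =>
    have ih := ih (fun l hl => hy l (by omega)) (fun l h1 hl => he l h1 (by omega))
    have h1 := hy n (by omega)
    have h2 := he (n + 1) (by omega) le_rfl
    rw [Finset.prod_Icc_succ_top (by omega), Finset.prod_Icc_succ_top (by omega),
      Nat.add_sub_cancel]
    calc _ = (y 0 * (∏ l ∈ Finset.Icc 1 n, y l / e l) *
          (∏ l ∈ Finset.Icc 1 n, e l / y (l - 1))) *
          (y (n + 1) / e (n + 1) * (e (n + 1) / y n)) := by ring
      _ = y (n + 1) := by rw [ih]; field_simp

/-- The identity along a single path, for real sequences `y` and `e` without zeros, by comparing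
increments. -/
lemma doob_identity_pathwise (y e M A N B : ℕ → ℝ) (n : ℕ) (hy : ∀ l ≤ n, y l ≠ 0)
    (he : ∀ l, 1 ≤ l → l ≤ n → e l ≠ 0)
    (hM : ∀ j, M j = ∑ l ∈ Finset.Icc 1 j, (y l - e l))
    (hA : ∀ j, A j = ∑ l ∈ Finset.Icc 1 j, (y (l - 1) - e l))
    (hN : ∀ j, N j = ∏ l ∈ Finset.Icc 1 j, y l / e l)
    (hB : ∀ j, B j = ∏ l ∈ Finset.Icc 1 j, e l / y (l - 1)) :
    M n - A n + ∑ l ∈ Finset.Icc 1 n, (A l - A (l - 1)) * (N l / N (l - 1)) =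
      y 0 * ∑ l ∈ Finset.Icc 1 n, B (l - 1) * (N l - N (l - 1)) := by
  induction n with
  | zero => simp [hM, hA]
  | succ n ih =>
    have ih := ih (fun l hl => hy l (by omega)) (fun l h1 hl => he l h1 (by omega))
    have hmul : y 0 * N n * B n = y n := by
      rw [hN, hB]
      exact mul_doob_pathwise y e n (fun l hl => hy l (by omega))
        (fun l h1 hl => he l h1 (by omega))
    have he1 := he (n + 1) (by omega) le_rfl
    have hNn : N n ≠ 0 := by
      rintro h
      exact hy n (by omega) (by rw [← hmul, h]; ring)
    have hMs : M (n + 1) = M n + (y (n + 1) - e (n + 1)) := by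
      rw [hM, hM, Finset.sum_Icc_succ_top (by omega)]
    have hAs : A (n + 1) = A n + (y n - e (n + 1)) := by
      rw [hA, hA, Finset.sum_Icc_succ_top (by omega), Nat.add_sub_cancel]
    have hNs : N (n + 1) = N n * (y (n + 1) / e (n + 1)) := by
      rw [hN, hN, Finset.prod_Icc_succ_top (by omega)]
    have hdiv : N (n + 1) / N n = y (n + 1) / e (n + 1) := by
      rw [hNs]; field_simp
    have hc : e (n + 1) * (y (n + 1) / e (n + 1)) = y (n + 1) := by field_simp
    rw [Finset.sum_Icc_succ_top (by omega), Finset.sum_Icc_succ_top (by omega),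
      Nat.add_sub_cancel, hdiv, hNs, hMs, hAs]
    linear_combination ih - (y (n + 1) / e (n + 1) - 1) * hmul - hc

/-- **Identity between the additive and multiplicative Doob representations.**
Assume `Z i > 0` a.s. With `Mstar`, `Astar` the additive Doob decomposition of the Snell
envelope `Y` and `Nstar j = ∏_{l=1}^{j} Y l / E[Y l | 𝓕 (l-1)]`,
`Bstar j = ∏_{l=1}^{j} E[Y l | 𝓕 (l-1)] / Y (l-1)` its multiplicative decomposition, we have
almost surely, for every `i ≤ T`,
`Mstar i - Astar i + ∑_{l=1}^{i} (Astar l - Astar (l-1)) * Nstar l / Nstar (l-1)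
  = Y 0 * ∑_{l=1}^{i} Bstar (l-1) * (Nstar l - Nstar (l-1))`. -/
theorem additive_multiplicative_doob_identity
    {Ω : Type*} {m0 : MeasurableSpace Ω} (μ : Measure Ω) [IsProbabilityMeasure μ]
    (T : ℕ) (𝓕 : Filtration ℕ m0) (Z Y Mstar Astar Nstar Bstar : ℕ → Ω → ℝ)
    -- `Z` is adapted, a.s. (strictly) positive and integrable on the horizon
    (hZadp : ∀ i, i ≤ T → StronglyMeasurable[𝓕 i] (Z i))
    (hZpos : ∀ i, i ≤ T → ∀ᵐ ω ∂μ, 0 < Z i ω)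
    (hZint : ∀ i, i ≤ T → Integrable (Z i) μ)
    -- `Y` is the Snell envelope of `Z`, given by backward recursion
    (hYT : Y T = Z T)
    (hYrec : ∀ i, i < T → Y i =ᵐ[μ] fun ω => max (Z i ω) ((μ[Y (i + 1)|𝓕 i]) ω))
    -- additive Doob decomposition of `Y`
    (hMstar : ∀ j, Mstar j = fun ω => ∑ l ∈ Finset.Icc 1 j, (Y l ω - (μ[Y l|𝓕 (l - 1)]) ω))
    (hAstar : ∀ j, Astar j = fun ω => ∑ l ∈ Finset.Icc 1 j, (Y (l - 1) ω - (μ[Y l|𝓕 (l - 1)]) ω))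
    -- multiplicative Doob decomposition of `Y`
    (hNstar : ∀ j, Nstar j = fun ω => ∏ l ∈ Finset.Icc 1 j, (Y l ω / (μ[Y l|𝓕 (l - 1)]) ω))
    (hBstar : ∀ j, Bstar j = fun ω => ∏ l ∈ Finset.Icc 1 j, ((μ[Y l|𝓕 (l - 1)]) ω / Y (l - 1) ω)) :
    ∀ i, i ≤ T →
      (fun ω => Mstar i ω - Astar i ω +
          ∑ l ∈ Finset.Icc 1 i, (Astar l ω - Astar (l - 1) ω) * (Nstar l ω / Nstar (l - 1) ω))
        =ᵐ[μ]
      (fun ω => Y 0 ω * ∑ l ∈ Finset.Icc 1 i, Bstar (l - 1) ω * (Nstar l ω - Nstar (l - 1) ω)) := by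
  have hYint : ∀ i, i ≤ T → Integrable (Y i) μ := by
    intro i hi
    rcases hi.eq_or_lt with rfl | hlt
    · rw [hYT]; exact hZint i le_rfl
    -- `condExp` is integrable by convention even for a non-integrable argument, so no induction
    -- on the horizon is needed.
    · exact ((hZint i hi).sup integrable_condExp).congr (hYrec i hlt).symm
  have hYpos : ∀ i, i ≤ T → ∀ᵐ ω ∂μ, 0 < Y i ω := by
    intro i hi
    rcases hi.eq_or_lt with rfl | hlt
    · rw [hYT]; exact hZpos i le_rfl
    · filter_upwards [hYrec i hlt, hZpos i hi] with ω h1 h2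
      rw [h1]
      exact lt_max_of_lt_left h2
  intro i hi
  have hy : ∀ᵐ ω ∂μ, ∀ l, l ≤ T → 0 < Y l ω := by
    simpa only [ae_all_iff] using hYpos
  have he : ∀ᵐ ω ∂μ, ∀ l, l ≤ T → 0 < (μ[Y l|𝓕 (l - 1)]) ω := by
    simp only [ae_all_iff]
    exact fun l hl => condExp_pos_of_ae_pos (𝓕.le _) (hYint l hl) (hYpos l hl)
  filter_upwards [hy, he] with ω h1 h2
  exact doob_identity_pathwise (fun l => Y l ω) (fun l => (μ[Y l|𝓕 (l - 1)]) ω)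
    (fun l => Mstar l ω) (fun l => Astar l ω) (fun l => Nstar l ω) (fun l => Bstar l ω) i
    (fun l hl => (h1 l (hl.trans hi)).ne') (fun l _ hl => (h2 l (hl.trans hi)).ne')
    (fun j => congrFun (hMstar j) ω) (fun j => congrFun (hAstar j) ω)
    (fun j => congrFun (hNstar j) ω) (fun j => congrFun (hBstar j) ω)
end

section
/- (Criterion for sure optimality.) Let M be a martingale with respect to (𝓕_i) and fix i ∈ {0,…,T}. If the random variable max_{i≤j≤T}(Z_j − M_j + M_i) is 𝓕_i-measurable (up to a null set), then max_{i≤j≤T}(Z_j − M_j + M_i) = Y*_i almost surely. -/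
/-!
Write `h = max_{i ≤ j ≤ T} (Z j - M j)`. By hypothesis `h` is `𝓕 i`-measurable up to a null set,
hence `E[M (k+1) + h | 𝓕 k] = M k + h` for every `i ≤ k < T`. The claim is `Y i = M i + h`, and
both inequalities follow by backward induction on `k`, without stopping times.

* `snell_le_add`: as `Z k ≤ M k + h` for all `k`, the process `M + h` is a martingale
  dominating `Z` from time `i` on, so it dominates the Snell envelope `Y`.
* `add_le_snell`: `M k + h ≤ Y k` on the event `C k` that `Z j - M j` has stayed below `h` for
  `i ≤ j < k`. At `k = T` the maximum can then only be attained at `T`, where `Y T = Z T`.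
  In the step, either `Z k - M k ≥ h` and `Y k ≥ Z k` suffices, or `C (k+1)` holds; this event
  lies in `𝓕 k`, so the inequality at `k + 1` restricted to it may be conditioned on `𝓕 k`.
  At `k = i` the event `C i` is everything.
-/

open MeasureTheory Filter Finset

section SnellAux

variable {Ω : Type*} {m0 : MeasurableSpace Ω} {μ : Measure Ω}
  {T : ℕ} {𝓕 : Filtration ℕ m0} {Z Y M : ℕ → Ω → ℝ}

/-- Backward induction on the horizon `{i, …, T}`. -/
lemma backward_induction {i T : ℕ} {P : ℕ → Prop} (hT : P T)
    (hstep : ∀ k, i ≤ k → k < T → P (k + 1) → P k) :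
    ∀ k, i ≤ k → k ≤ T → P k := by
  intro k hik hkT
  induction hn : T - k generalizing k with
  | zero =>
    obtain rfl : k = T := by omega
    exact hT
  | succ n ih => exact hstep k hik (by omega) (ih (k + 1) (by omega) (by omega) (by omega))

lemma snell_integrable
    (hZint : ∀ i, i ≤ T → Integrable (Z i) μ)
    (hYT : Y T = Z T)
    (hYrec : ∀ i, i < T → Y i =ᵐ[μ] fun ω => max (Z i ω) ((μ[Y (i + 1)|𝓕 i]) ω))
    (k : ℕ) (hk : k ≤ T) : Integrable (Y k) μ := by
  refine backward_induction (i := 0) (P := fun k => Integrable (Y k) μ) ?_ ?_ k k.zero_le hk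
  · rw [hYT]; exact hZint T le_rfl
  · intro k _ hk _
    exact ((hZint k hk.le).sup integrable_condExp).congr (hYrec k hk).symm

variable [IsProbabilityMeasure μ]

/-- Adding an `𝓕 i`-measurable integrable variable to a martingale preserves the martingale
property from time `i` on. -/
lemma condExp_martingale_add
    (hMint : ∀ i, i ≤ T → Integrable (M i) μ)
    (hMmart : ∀ i, i + 1 ≤ T → μ[M (i + 1)|𝓕 i] =ᵐ[μ] M i)
    {i : ℕ} {h : Ω → ℝ} (hh : StronglyMeasurable[𝓕 i] h) (hhint : Integrable h μ)
    {k : ℕ} (hik : i ≤ k) (hk : k < T) :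
    μ[M (k + 1) + h|𝓕 k] =ᵐ[μ] M k + h := by
  refine (condExp_add (hMint (k + 1) hk) hhint (𝓕 k)).trans ((hMmart k hk).add ?_)
  rw [condExp_of_stronglyMeasurable (𝓕.le k) (hh.mono (𝓕.mono hik)) hhint]

lemma snell_le_add
    (hZint : ∀ i, i ≤ T → Integrable (Z i) μ)
    (hYT : Y T = Z T)
    (hYrec : ∀ i, i < T → Y i =ᵐ[μ] fun ω => max (Z i ω) ((μ[Y (i + 1)|𝓕 i]) ω))
    (hMint : ∀ i, i ≤ T → Integrable (M i) μ)
    (hMmart : ∀ i, i + 1 ≤ T → μ[M (i + 1)|𝓕 i] =ᵐ[μ] M i)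
    {i : ℕ} (hi : i ≤ T) {h : Ω → ℝ} (hh : StronglyMeasurable[𝓕 i] h) (hhint : Integrable h μ)
    (hle : ∀ᵐ ω ∂μ, ∀ j ∈ Finset.Icc i T, Z j ω - M j ω ≤ h ω) :
    ∀ k, i ≤ k → k ≤ T → Y k ≤ᵐ[μ] M k + h := by
  refine backward_induction ?_ ?_
  · rw [hYT]
    filter_upwards [hle] with ω hω
    have := hω T (Finset.mem_Icc.mpr ⟨hi, le_rfl⟩)
    simp only [Pi.add_apply]; linarith
  · intro k hik hk ih
    have hmono : μ[Y (k + 1)|𝓕 k] ≤ᵐ[μ] μ[M (k + 1) + h|𝓕 k] :=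
      condExp_mono (snell_integrable hZint hYT hYrec _ hk) ((hMint _ hk).add hhint) ih
    filter_upwards [hle, hYrec k hk, hmono, condExp_martingale_add hMint hMmart hh hhint hik hk]
      with ω hω hY hmω hc
    have := hω k (Finset.mem_Icc.mpr ⟨hik, hk.le⟩)
    rw [hY]
    rw [hc] at hmω
    refine max_le ?_ hmω
    simp only [Pi.add_apply]; linarith

lemma add_le_snell
    (hZadp : ∀ i, i ≤ T → StronglyMeasurable[𝓕 i] (Z i))
    (hZint : ∀ i, i ≤ T → Integrable (Z i) μ)
    (hYT : Y T = Z T)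
    (hYrec : ∀ i, i < T → Y i =ᵐ[μ] fun ω => max (Z i ω) ((μ[Y (i + 1)|𝓕 i]) ω))
    (hMadp : ∀ i, i ≤ T → StronglyMeasurable[𝓕 i] (M i))
    (hMint : ∀ i, i ≤ T → Integrable (M i) μ)
    (hMmart : ∀ i, i + 1 ≤ T → μ[M (i + 1)|𝓕 i] =ᵐ[μ] M i)
    {i : ℕ} {h : Ω → ℝ} (hh : StronglyMeasurable[𝓕 i] h) (hhint : Integrable h μ)
    (hge : ∀ᵐ ω ∂μ, ∃ j ∈ Finset.Icc i T, h ω ≤ Z j ω - M j ω) :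
    ∀ k, i ≤ k → k ≤ T →
      ∀ᵐ ω ∂μ, (∀ j ∈ Finset.Ico i k, Z j ω - M j ω < h ω) → M k ω + h ω ≤ Y k ω := by
  refine backward_induction ?_ ?_
  · filter_upwards [hge] with ω ⟨j, hj, hjω⟩ hlt
    rw [hYT]
    obtain ⟨hij, hjT⟩ := Finset.mem_Icc.mp hj
    rcases hjT.lt_or_eq with hjT | rfl
    · exact absurd (hlt j (Finset.mem_Ico.mpr ⟨hij, hjT⟩)) (not_lt.mpr hjω)
    · linarith
  · intro k hik hk ih
    let C : Set Ω := {ω | ∀ j ∈ Finset.Ico i (k + 1), Z j ω - M j ω < h ω}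
    have hC : MeasurableSet[𝓕 k] C := by
      have hCeq : C = ⋂ j ∈ Finset.Ico i (k + 1), {ω | Z j ω - M j ω < h ω} := by
        ext ω; simp [C]
      rw [hCeq]
      refine Finset.measurableSet_biInter _ fun j hj => ?_
      have hjk : j ≤ k := by have := Finset.mem_Ico.mp hj; omega
      exact measurableSet_lt
        (((hZadp j (hjk.trans hk.le)).mono (𝓕.mono hjk)).measurable.sub
          ((hMadp j (hjk.trans hk.le)).mono (𝓕.mono hjk)).measurable)
        (hh.mono (𝓕.mono hik)).measurable
    have hYint := snell_integrable hZint hYT hYrec (k + 1) hk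
    have hMhint := (hMint (k + 1) hk).add hhint
    have hmono : μ[C.indicator (M (k + 1) + h)|𝓕 k] ≤ᵐ[μ] μ[C.indicator (Y (k + 1))|𝓕 k] := by
      refine condExp_mono (hMhint.indicator (𝓕.le k _ hC)) (hYint.indicator (𝓕.le k _ hC)) ?_
      filter_upwards [ih] with ω hω
      by_cases hωC : ω ∈ C
      · simp only [Set.indicator_of_mem hωC]
        exact hω hωC
      · simp only [Set.indicator_of_notMem hωC, le_refl]
    filter_upwards [hmono, condExp_indicator hMhint hC, condExp_indicator hYint hC, hYrec k hk,
      condExp_martingale_add hMint hMmart hh hhint hik hk] with ω hmω h1 h2 hY hc hlt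
    rw [hY]
    by_cases hkω : h ω ≤ Z k ω - M k ω
    · exact le_max_of_le_left (by linarith)
    · have hωC : ω ∈ C := by
        intro j hj
        obtain ⟨hij, hjk⟩ := Finset.mem_Ico.mp hj
        rcases (Nat.lt_succ_iff.mp hjk).lt_or_eq with hjk | rfl
        · exact hlt j (Finset.mem_Ico.mpr ⟨hij, hjk⟩)
        · exact not_le.mp hkω
      rw [h1, h2, Set.indicator_of_mem hωC, Set.indicator_of_mem hωC, hc] at hmω
      exact le_max_of_le_right hmω

end SnellAux

/-- **Criterion for sure optimality (Theorem `sureth`).**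
Let `M` be a martingale with respect to `𝓕` and fix `i ≤ T`. If the random variable
`max_{i ≤ j ≤ T} (Z j - M j + M i)` coincides a.s. with an `𝓕 i`-measurable random variable,
then `max_{i ≤ j ≤ T} (Z j - M j + M i) = Y i` almost surely, where `Y` is the Snell
envelope of `Z`. -/
theorem dual_max_eq_snell_of_measurable
    {Ω : Type*} {m0 : MeasurableSpace Ω} (μ : Measure Ω) [IsProbabilityMeasure μ]
    (T : ℕ) (𝓕 : Filtration ℕ m0) (Z Y M : ℕ → Ω → ℝ)
    -- `Z` is adapted, nonnegative and integrable on the horizon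
    (hZadp : ∀ i, i ≤ T → StronglyMeasurable[𝓕 i] (Z i))
    (hZnn : ∀ i, i ≤ T → 0 ≤ᵐ[μ] Z i)
    (hZint : ∀ i, i ≤ T → Integrable (Z i) μ)
    -- `Y` is the Snell envelope of `Z`, given by backward recursion
    (hYT : Y T = Z T)
    (hYrec : ∀ i, i < T → Y i =ᵐ[μ] fun ω => max (Z i ω) ((μ[Y (i + 1)|𝓕 i]) ω))
    -- `M` is a martingale on the horizon (integrable at each time)
    (hMadp : ∀ i, i ≤ T → StronglyMeasurable[𝓕 i] (M i))
    (hMint : ∀ i, i ≤ T → Integrable (M i) μ)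
    (hMmart : ∀ i, i + 1 ≤ T → μ[M (i + 1)|𝓕 i] =ᵐ[μ] M i)
    (i : ℕ) (hi : i ≤ T)
    -- the pathwise maximum is `𝓕 i`-measurable up to a null set
    (hmeas : ∃ g : Ω → ℝ, StronglyMeasurable[𝓕 i] g ∧
      (fun ω => (Finset.Icc i T).sup' (Finset.nonempty_Icc.mpr hi)
        (fun j => Z j ω - M j ω + M i ω)) =ᵐ[μ] g) :
    (fun ω => (Finset.Icc i T).sup' (Finset.nonempty_Icc.mpr hi)
      (fun j => Z j ω - M j ω + M i ω)) =ᵐ[μ] Y i := by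
  obtain ⟨g, hg, hgeq⟩ := hmeas
  have hh : StronglyMeasurable[𝓕 i] (g - M i) := hg.sub (hMadp i hi)
  have hle : ∀ᵐ ω ∂μ, ∀ j ∈ Finset.Icc i T, Z j ω - M j ω ≤ (g - M i) ω := by
    filter_upwards [hgeq] with ω hω j hj
    have := Finset.le_sup' (fun j => Z j ω - M j ω + M i ω) hj
    simp only [Pi.sub_apply]; linarith
  have hge : ∀ᵐ ω ∂μ, ∃ j ∈ Finset.Icc i T, (g - M i) ω ≤ Z j ω - M j ω := by
    filter_upwards [hgeq] with ω hω
    obtain ⟨j, hj, hjω⟩ := Finset.exists_mem_eq_sup' (Finset.nonempty_Icc.mpr hi)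
      (fun j => Z j ω - M j ω + M i ω)
    refine ⟨j, hj, ?_⟩
    simp only [Pi.sub_apply]; linarith
  have hhint : Integrable (g - M i) μ := by
    -- `|g - M i|` is dominated by `∑ j, |Z j - M j|`, since the maximum is one of its terms.
    refine Integrable.mono' (g := fun ω => ∑ j ∈ Finset.Icc i T, |Z j ω - M j ω|)
      (integrable_finsetSum _ fun j hj => ?_) (hh.mono (𝓕.le i)).aestronglyMeasurable ?_
    · have hjT := (Finset.mem_Icc.mp hj).2
      exact ((hZint j hjT).sub (hMint j hjT)).abs
    · filter_upwards [hle, hge] with ω h1 ⟨j, hj, hjω⟩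
      rw [le_antisymm hjω (h1 j hj), Real.norm_eq_abs]
      exact Finset.single_le_sum (f := fun j => |Z j ω - M j ω|) (fun _ _ => abs_nonneg _) hj
  filter_upwards [hgeq, snell_le_add hZint hYT hYrec hMint hMmart hi hh hhint hle i le_rfl hi,
    add_le_snell hZadp hZint hYT hYrec hMadp hMint hMmart hh hhint hge i le_rfl hi]
    with ω hω h1 h2
  rw [hω]
  have h2' := h2 (by simp)
  simp only [Pi.add_apply, Pi.sub_apply] at h1 h2'
  linarith
end

section
/- The uniform integrability assumption in the stability theorem cannot be dropped: there exist a filtered probability space with horizon T = 1 and trivial 𝓕_0, the cash-flow Z_0 = Z_1 = 0 (so Y*_0 = 0), and a sequence of martingales (M^{(n)})_{n≥1} with M_0^{(n)} = 0 such that, setting θ_0^{(n)} := max(Z_0 − M_0^{(n)}, Z_1 − M_1^{(n)}), one has Var θ_0^{(n)} = (n−1)/n² → 0 while E θ_0^{(n)} = (n−1)/n → 1 ≠ 0 = Y*_0; moreover the family (M_1^{(n)})_{n≥1} is not uniformly integrable. (A witness: M_1^{(n)} = −ξ^{(n)} with ξ^{(n)} = 1 with probability (n−1)/n and ξ^{(n)}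 = 1−n with probability 1/n.) -/
/-!
The space is the unit interval with Lebesgue measure, `𝓕 0` is trivial and `𝓕 i` is the Borel
σ-algebra for `i ≥ 1`. On the event `{ω ≤ 1/n}`, of probability `1/n`, set `M n 1 = n - 1`, and set
`M n 1 = -1` elsewhere. Then `M n 1` is centred, hence a martingale increment over the trivial
σ-algebra, while `θ n = max 0 (-M n 1)` is the indicator of an event of probability `1 - 1/n`:
the truncation at `0` discards the rare large value that kept the mean at zero. Uniform
integrability fails because the shrinking events `{ω ≤ 1/n}` each carry mass `(n - 1)/n` of
`|M n 1|`. All expectations are instances of `integral_twoPoint`.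
-/

open MeasureTheory Filter Finset

/-- Lebesgue measure on the unit interval, as a measure on `ℝ`. -/
noncomputable def unitLebesgue : Measure ℝ := volume.restrict (Set.Ioc 0 1)

instance : IsProbabilityMeasure unitLebesgue :=
  ⟨by simp [unitLebesgue]⟩

lemma unitLebesgue_Iic (n : ℕ) (hn : 1 ≤ n) :
    unitLebesgue (Set.Iic (1 / (n : ℝ))) = ENNReal.ofReal (1 / n) := by
  have h1 : (1 / (n : ℝ)) ≤ 1 := by
    rw [div_le_one (by positivity)]
    exact_mod_cast hn
  have h : Set.Iic (1 / (n : ℝ)) ∩ Set.Ioc 0 1 = Set.Ioc 0 (1 / (n : ℝ)) := by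
    ext x
    simp only [Set.mem_inter_iff, Set.mem_Iic, Set.mem_Ioc]
    constructor
    · rintro ⟨h2, h3, -⟩
      exact ⟨h3, h2⟩
    · rintro ⟨h2, h3⟩
      exact ⟨h3, h2, h3.trans h1⟩
  rw [unitLebesgue, Measure.restrict_apply measurableSet_Iic, h, Real.volume_Ioc, sub_zero]

/-- The random variable with value `a` on `{ω ≤ 1/n}` and `b` elsewhere. -/
noncomputable def twoPoint (n : ℕ) (a b : ℝ) (ω : ℝ) : ℝ :=
  if ω ≤ 1 / (n : ℝ) then a else b

lemma measurable_twoPoint (n : ℕ) (a b : ℝ) : Measurable (twoPoint n a b) :=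
  Measurable.ite measurableSet_Iic measurable_const measurable_const

lemma twoPoint_eq (n : ℕ) (a b : ℝ) :
    twoPoint n a b = fun ω => b + (Set.Iic (1 / (n : ℝ))).indicator (fun _ => a - b) ω := by
  funext ω
  by_cases h : ω ≤ 1 / (n : ℝ)
  · simp only [twoPoint, if_pos h, Set.indicator_of_mem (Set.mem_Iic.2 h)]
    ring
  · simp only [twoPoint, if_neg h, Set.indicator_of_notMem (mt Set.mem_Iic.1 h), add_zero]

lemma integrable_twoPoint (n : ℕ) (a b : ℝ) : Integrable (twoPoint n a b) unitLebesgue := by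
  rw [twoPoint_eq]
  exact (integrable_const b).add ((integrable_const _).indicator measurableSet_Iic)

lemma integral_twoPoint (n : ℕ) (hn : 1 ≤ n) (a b : ℝ) :
    ∫ ω, twoPoint n a b ω ∂unitLebesgue = b + (a - b) / n := by
  rw [twoPoint_eq, integral_add (integrable_const b)
    ((integrable_const _).indicator measurableSet_Iic), integral_indicator measurableSet_Iic,
    setIntegral_const, measureReal_def, unitLebesgue_Iic n hn,
    ENNReal.toReal_ofReal (by positivity)]
  simp
  ring

/-- No information at time `0`, the full Borel σ-algebra from time `1` on. -/
def revealFiltration : Filtration ℕ (borel ℝ) where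
  seq i := if i = 0 then ⊥ else borel ℝ
  mono' := by
    intro i j hij
    by_cases hi : i = 0
    · simp [hi]
    · have hj : j ≠ 0 := by omega
      simp [hi, hj]
  le' := by
    intro i
    by_cases hi : i = 0 <;> simp [hi]

/-- The process with `M n 0 = 0` and, from time `1` on, the constant-in-time value `n - 1` on
`{ω ≤ 1/n}` and `-1` elsewhere. -/
noncomputable def spikeProcess (n i : ℕ) : ℝ → ℝ :=
  if i = 0 then 0 else twoPoint n ((n : ℝ) - 1) (-1)

lemma spikeProcess_zero (n : ℕ) : spikeProcess n 0 = 0 := rfl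

lemma spikeProcess_one (n : ℕ) : spikeProcess n 1 = twoPoint n ((n : ℝ) - 1) (-1) := rfl

lemma dual_eq (n : ℕ) (hn : 1 ≤ n) (ω : ℝ) :
    max (0 - spikeProcess n 0 ω) (0 - spikeProcess n 1 ω) = twoPoint n 0 1 ω := by
  have h1 : (1 : ℝ) ≤ n := by exact_mod_cast hn
  rw [spikeProcess_zero, spikeProcess_one]
  by_cases h : ω ≤ 1 / (n : ℝ)
  · simp only [twoPoint, if_pos h, Pi.zero_apply, sub_zero]
    exact max_eq_left (by linarith)
  · simp only [twoPoint, if_neg h, Pi.zero_apply]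
    norm_num

lemma integral_dual (n : ℕ) (hn : 1 ≤ n) :
    ∫ ω, max (0 - spikeProcess n 0 ω) (0 - spikeProcess n 1 ω) ∂unitLebesgue
      = ((n : ℝ) - 1) / n := by
  have h1 : (n : ℝ) ≠ 0 := by positivity
  simp only [dual_eq n hn]
  rw [integral_twoPoint n hn]
  field_simp
  ring

lemma variance_dual (n : ℕ) (hn : 1 ≤ n) :
    (∫ ω, (max (0 - spikeProcess n 0 ω) (0 - spikeProcess n 1 ω)) ^ 2 ∂unitLebesgue)
      - (∫ ω, max (0 - spikeProcess n 0 ω) (0 - spikeProcess n 1 ω) ∂unitLebesgue) ^ 2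
      = ((n : ℝ) - 1) / (n : ℝ) ^ 2 := by
  have h1 : (n : ℝ) ≠ 0 := by positivity
  have h2 : ∀ ω, (twoPoint n 0 1 ω) ^ 2 = twoPoint n 0 1 ω := by
    intro ω
    unfold twoPoint
    split_ifs <;> norm_num
  rw [integral_dual n hn]
  simp only [dual_eq n hn, h2]
  rw [integral_twoPoint n hn]
  field_simp
  ring

lemma condExp_spikeProcess (n : ℕ) (hn : 1 ≤ n) :
    unitLebesgue[spikeProcess n 1|⊥] = spikeProcess n 0 := by
  have h1 : (n : ℝ) ≠ 0 := by positivity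
  rw [condExp_bot, spikeProcess_one, integral_twoPoint n hn, spikeProcess_zero]
  funext _
  simp only [Pi.zero_apply]
  field_simp
  ring

lemma tendsto_mean : Tendsto (fun n : ℕ => ((n : ℝ) - 1) / n) atTop (nhds 1) := by
  have h : Tendsto (fun n : ℕ => 1 - 1 / (n : ℝ)) atTop (nhds (1 - 0)) :=
    tendsto_const_nhds.sub tendsto_one_div_atTop_nhds_zero_nat
  rw [sub_zero] at h
  refine h.congr' ?_
  filter_upwards [eventually_ge_atTop 1] with n hn
  have h1 : (n : ℝ) ≠ 0 := by positivity
  field_simp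

lemma tendsto_variance :
    Tendsto (fun n : ℕ => ((n : ℝ) - 1) / (n : ℝ) ^ 2) atTop (nhds 0) := by
  have h := tendsto_mean.mul (tendsto_one_div_atTop_nhds_zero_nat (𝕜 := ℝ))
  rw [mul_zero] at h
  refine h.congr fun n => ?_
  rw [div_mul_div_comm, mul_one, sq]

lemma not_uniformIntegrable_spikeProcess :
    ¬ UniformIntegrable (fun n : ℕ => spikeProcess (n + 1) 1) 1 unitLebesgue := by
  rintro ⟨-, h, -⟩
  obtain ⟨δ, hδ, hb⟩ := h (ε := 1 / 4) (by norm_num)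
  obtain ⟨k, hk⟩ := exists_nat_one_div_lt hδ
  -- with `n ≥ 1`, the mass `n / (n + 1)` of the spike exceeds `1 / 4`
  set n := k + 1 with hn
  have hμ : unitLebesgue (Set.Iic (1 / ((n + 1 : ℕ) : ℝ))) = ENNReal.ofReal (1 / (n + 1 : ℕ)) :=
    unitLebesgue_Iic (n + 1) (by omega)
  have hle : (1 : ℝ) / ((n + 1 : ℕ) : ℝ) ≤ δ := by
    refine le_trans ?_ hk.le
    apply one_div_le_one_div_of_le (by positivity)
    push_cast [hn]
    linarith
  have h1 := hb n _ measurableSet_Iic (hμ.trans_le (ENNReal.ofReal_le_ofReal hle))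
  have h2 : (Set.Iic (1 / ((n + 1 : ℕ) : ℝ))).indicator (spikeProcess (n + 1) 1)
      = (Set.Iic (1 / ((n + 1 : ℕ) : ℝ))).indicator (fun _ => (n : ℝ)) := by
    apply Set.indicator_congr
    intro ω hω
    rw [spikeProcess_one, twoPoint, if_pos (Set.mem_Iic.1 hω)]
    push_cast
    ring
  simp only [h2] at h1
  rw [eLpNorm_indicator_const measurableSet_Iic one_ne_zero ENNReal.one_ne_top, hμ,
    Real.enorm_eq_ofReal (by positivity)] at h1
  simp only [ENNReal.toReal_one, div_one, ENNReal.rpow_one] at h1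
  rw [← ENNReal.ofReal_mul (by positivity), ENNReal.ofReal_le_ofReal_iff (by norm_num),
    mul_one_div, div_le_iff₀ (by positivity)] at h1
  push_cast [hn] at h1
  have : (0 : ℝ) ≤ k := by positivity
  linarith

/-- **The uniform integrability assumption in the stability theorem cannot be dropped.**
There exist a filtered probability space with horizon `T = 1` and trivial `𝓕 0`, the zero
cash-flow `Z 0 = Z 1 = 0` (whose Snell envelope satisfies `Y 0 = 0`), and a sequence of
martingales `M n` (for `n ≥ 1`, indexed here as `M (n+1)`) with `M n 0 = 0` such that,
setting `θ n := max (0 - M n 0) (0 - M n 1)`, one has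
`Var (θ n) = (n-1)/n² → 0` while `E (θ n) = (n-1)/n → 1 ≠ 0`; moreover the family
`(M n 1)_{n ≥ 1}` is not uniformly integrable. -/
theorem exists_counterexample_stability_without_uniform_integrability :
    ∃ (Ω : Type) (m0 : MeasurableSpace Ω) (μ : Measure Ω) (_ : IsProbabilityMeasure μ)
      (𝓕 : Filtration ℕ m0) (M : ℕ → ℕ → Ω → ℝ),
      -- `𝓕 0` is the trivial σ-algebra
      (𝓕 0 : MeasurableSpace Ω) = ⊥ ∧
      -- each `M n`, `n ≥ 1`, is a martingale on the horizon `{0, 1}` with `M n 0 = 0`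
      (∀ n, 1 ≤ n →
        (∀ i, i ≤ 1 → StronglyMeasurable[𝓕 i] (M n i)) ∧
        (∀ i, i ≤ 1 → Integrable (M n i) μ) ∧
        (μ[M n 1|𝓕 0] =ᵐ[μ] M n 0) ∧
        M n 0 = 0) ∧
      -- with the zero cash-flow `Z = 0`, the dual estimator `θ n = max (0 - M n 0) (0 - M n 1)`
      -- has mean `(n-1)/n` …
      (∀ n, 1 ≤ n →
        ∫ ω, max (0 - M n 0 ω) (0 - M n 1 ω) ∂μ = ((n : ℝ) - 1) / n) ∧
      -- … and variance `(n-1)/n²`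
      (∀ n, 1 ≤ n →
        (∫ ω, (max (0 - M n 0 ω) (0 - M n 1 ω)) ^ 2 ∂μ)
          - (∫ ω, max (0 - M n 0 ω) (0 - M n 1 ω) ∂μ) ^ 2 = ((n : ℝ) - 1) / (n : ℝ) ^ 2) ∧
      -- hence the variances tend to `0` …
      Tendsto (fun n =>
        (∫ ω, (max (0 - M n 0 ω) (0 - M n 1 ω)) ^ 2 ∂μ)
          - (∫ ω, max (0 - M n 0 ω) (0 - M n 1 ω) ∂μ) ^ 2) atTop (nhds 0) ∧
      -- … while the means tend to `1 ≠ 0 = Y 0`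
      Tendsto (fun n => ∫ ω, max (0 - M n 0 ω) (0 - M n 1 ω) ∂μ) atTop (nhds 1) ∧
      -- and the family `(M n 1)_{n ≥ 1}` is not uniformly integrable
      ¬ UniformIntegrable (fun n : ℕ => M (n + 1) 1) 1 μ := by
  refine ⟨ℝ, borel ℝ, unitLebesgue, inferInstance, revealFiltration, spikeProcess, rfl,
    fun n hn => ⟨fun i _ => ?_, fun i _ => ?_, ?_, spikeProcess_zero n⟩, integral_dual,
    variance_dual, ?_, ?_, not_uniformIntegrable_spikeProcess⟩
  · rcases Nat.eq_zero_or_pos i with rfl | hi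
    · rw [spikeProcess_zero]
      exact stronglyMeasurable_zero
    · have h1 : spikeProcess n i = twoPoint n ((n : ℝ) - 1) (-1) := if_neg hi.ne'
      have h2 : revealFiltration i = borel ℝ := if_neg hi.ne'
      rw [h1, h2]
      exact (measurable_twoPoint n _ _).stronglyMeasurable
  · rcases Nat.eq_zero_or_pos i with rfl | hi
    · rw [spikeProcess_zero]
      exact integrable_zero _ _ _
    · have h1 : spikeProcess n i = twoPoint n ((n : ℝ) - 1) (-1) := if_neg hi.ne'
      rw [h1]
      exact integrable_twoPoint n _ _
  · exact (condExp_spikeProcess n hn).eventuallyEq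
  · refine tendsto_variance.congr' ?_
    filter_upwards [eventually_ge_atTop 1] with n hn
    exact (variance_dual n hn).symm
  · refine tendsto_mean.congr' ?_
    filter_upwards [eventually_ge_atTop 1] with n hn
    exact (integral_dual n hn).symm
end
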